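/- Let G be a tree (a connected graph with no cycles) on the vertex set [n]. Then S/J_G is approximately Cohen-Macaulay if and only if G is 3-star like. -/

import Mathlib

/-!
Write `n` for the number of vertices, `c(T)` for the number of components of `G - T`, `P_T` for the
prime attached to `T`, `S/P_T` having dimension `n - |T| + c(T)`, and `J = J_G`.

Everything rests on one recursion. For a vertex `v`, the ideal `J` is the intersection of the ideal
in which the neighbours of `v` are made into a clique (`v` is eliminated) and of the ideal of
`G - v` together with the variables `x_v, y_v` (`v` is deleted); the sum of the two ideals is
obtained by doing both (`gI_elim`, `gI_elim_sup`). The ideals reached in this way are the `gI T W`,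
where `T` is the set of deleted and `W` the set of eliminated vertices; when nothing is left one
arrives at the primes `P_T`. These are ideals of disjoint unions of cliques: they are kernels of
monomial parametrizations (`ker_param`), and they are Cohen-Macaulay by linkage
(`cliqueI_depth`, `cliqueI_dim`). Going back along the recursion, with depth measured by the
vanishing of `Ext` (`HasDepth`), one finds for a forest that `depth S/gI T W ≥ dim S/P_T`
for all `W` (`gI_depth`). In particular `depth S/J ≥ n + 1`.

If `S/J` is approximately Cohen-Macaulay, witnessed by `f`, then `dim S/J ≤ n + 2`
(`dim_le_of_isACM`): the product `s` of all `x_v` satisfies `s P_∅ ⊆ J`, and the annihilator of `s`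
modulo `J + (f ^ (n + 1))` is proper, as one sees on the line `x = (X, …, X)`, `y = 0`. So
`S/(J + (f ^ (n + 1)))` has an associated prime containing `P_∅`, and its depth is at most
`dim S/P_∅ = n + 1`. Hence `c(T) ≤ |T| + 2` for all `T`, which excludes vertices of degree four
(`T = {v}`) and pairs of nonadjacent vertices of degree three (`T = {a, b}`); three pairwise
adjacent vertices do not occur in a tree.

Conversely, let `B` be the set of vertices of degree three in a three-star-like tree. If `B` is
empty, then `S/J` is Cohen-Macaulay. Otherwise `J = Q ∩ U`, where `Q` is obtained by eliminating
`B`, with `dim S/Q = n + 1`, and `U` is the intersection of the ideals in which one vertex of `B`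
is deleted; `S/U` is Cohen-Macaulay of dimension `n + 2`. A minor `f` of two neighbours of a vertex
of `B` (or a sum of two such) lies in `Q` and is regular modulo `U` (`minor_regular`). Then
`J : f ^ m = U`, and the sequence `0 → S/U → S/J → S/(J + (f ^ m)) → 0` yields depth at least
`n + 1` for the quotient, which is also its dimension (`isACM_of`).
-/

open MvPolynomial CategoryTheory Opposite

noncomputable section

namespace BEIPaper

/-- The `x_i` variable of the polynomial ring `K[x_1,…,x_n,y_1,…,y_n]`,
which we realize as `MvPolynomial (σ ⊕ σ) K`, where `Sum.inl i ↦ x_i` and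
`Sum.inr i ↦ y_i`. -/
def xv (K : Type) [Field K] {σ : Type} (i : σ) : MvPolynomial (σ ⊕ σ) K :=
  X (Sum.inl i)

/-- The `y_i` variable. -/
def yv (K : Type) [Field K] {σ : Type} (i : σ) : MvPolynomial (σ ⊕ σ) K :=
  X (Sum.inr i)

/-- The binomial edge ideal of a graph `G` on the vertex set `[n]`:
generated by the binomials `x_i y_j - x_j y_i` for edges `{i, j}` with `i < j`. -/
def bei (K : Type) [Field K] {n : ℕ} (G : SimpleGraph (Fin n)) :
    Ideal (MvPolynomial (Fin n ⊕ Fin n) K) :=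
  Ideal.span {f | ∃ i j : Fin n, i < j ∧ G.Adj i j ∧
    f = xv K i * yv K j - xv K j * yv K i}

/-- The prime ideal `P_T(G)`: generated by `{x_i, y_i : i ∈ T}` together with the
binomial edge ideals of the complete graphs on the vertex sets of the connected
components of the induced subgraph of `G` on `[n] ∖ T` (equivalently, all binomials
`x_i y_j - x_j y_i` where `i < j` lie outside `T` in the same connected component). -/
def PT (K : Type) [Field K] {n : ℕ} (G : SimpleGraph (Fin n)) (T : Set (Fin n)) :
    Ideal (MvPolynomial (Fin n ⊕ Fin n) K) :=
  Ideal.span ((xv K '' T) ∪ (yv K '' T) ∪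
    {f | ∃ i j : Fin n, ∃ (hi : i ∈ Tᶜ) (hj : j ∈ Tᶜ), i < j ∧
      (G.induce Tᶜ).Reachable ⟨i, hi⟩ ⟨j, hj⟩ ∧
      f = xv K i * yv K j - xv K j * yv K i})

/-- `c(T)`: the number of connected components of the induced subgraph of `G`
on `[n] ∖ T`. -/
def ncomp {n : ℕ} (G : SimpleGraph (Fin n)) (T : Set (Fin n)) : ℕ :=
  Nat.card (G.induce Tᶜ).ConnectedComponent

/-- The graded (irrelevant) maximal ideal of a polynomial ring, generated by
all the variables. -/
def mIdeal (K : Type) [Field K] (σ : Type) : Ideal (MvPolynomial σ K) :=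
  Ideal.span (Set.range X)

/-- The depth of a module `M` with respect to an ideal `I`: the supremum of lengths
of `M`-regular sequences consisting of elements of `I`. -/
def depth {R : Type} [CommRing R] (I : Ideal R) (M : Type) [AddCommGroup M]
    [Module R M] : ℕ∞ :=
  sSup {k : ℕ∞ | ∃ rs : List R, (rs.length : ℕ∞) = k ∧ (∀ r ∈ rs, r ∈ I) ∧
    RingTheory.Sequence.IsRegular M rs}

/-- The (Krull) dimension of a module: the Krull dimension of `R` modulo the
annihilator of `M`. -/
def mdim (R : Type) [CommRing R] (M : Type) [AddCommGroup M] [Module R M] :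
    WithBot ℕ∞ :=
  ringKrullDim (R ⧸ Module.annihilator R M)

/-- `M` is a Cohen-Macaulay `R`-module of dimension `d` (depth and dimension both
being taken with respect to the given (maximal graded) ideal `I`). -/
def IsCMmodOfDim {R : Type} [CommRing R] (I : Ideal R) (M : Type) [AddCommGroup M]
    [Module R M] (d : ℕ) : Prop :=
  (depth I M : WithBot ℕ∞) = mdim R M ∧ mdim R M = (d : ℕ∞)

/-- The quotient `S/J` of a polynomial ring `S` by an ideal `J` is a Cohen-Macaulay
ring: its depth with respect to the graded maximal ideal equals its Krull dimension. -/
def IsCMQuot (K : Type) [Field K] {σ : Type} (J : Ideal (MvPolynomial σ K)) : Prop :=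
  (depth (mIdeal K σ) (MvPolynomial σ K ⧸ J) : WithBot ℕ∞) =
    ringKrullDim (MvPolynomial σ K ⧸ J)

/-- `S/I` is approximately Cohen-Macaulay: there is a homogeneous element `x` of
positive degree in the irrelevant ideal of `R = S/I` (i.e. the image of a homogeneous
polynomial `f` of positive degree) such that `R/x^m R = S/(I + (f^m))` is a
Cohen-Macaulay ring of dimension `dim R - 1` for all `m ≥ 1`. -/
def IsACM (K : Type) [Field K] {σ : Type} (I : Ideal (MvPolynomial σ K)) : Prop :=
  ∃ (d : ℕ) (f : MvPolynomial σ K), 0 < d ∧ f.IsHomogeneous d ∧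
    ∀ m : ℕ, 1 ≤ m →
      IsCMQuot K (I ⊔ Ideal.span {f ^ m}) ∧
      ringKrullDim (MvPolynomial σ K ⧸ (I ⊔ Ideal.span {f ^ m})) + 1 =
        ringKrullDim (MvPolynomial σ K ⧸ I)

/-- The Hilbert series of `S/I` (for a homogeneous ideal `I`), as a power series
over `ℤ`: the `m`-th coefficient is the `K`-dimension of the degree-`m` graded
component of `S/I`, i.e. of the image of the space of degree-`m` homogeneous
polynomials in `S/I`. -/
def hseries (K : Type) [Field K] {σ : Type} (I : Ideal (MvPolynomial σ K)) :
    PowerSeries ℤ :=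
  PowerSeries.mk fun m =>
    (Module.finrank K (Submodule.map (Ideal.Quotient.mkₐ K I).toLinearMap
      (homogeneousSubmodule σ K m)) : ℤ)

/-- The formal power series variable `t`. -/
def t : PowerSeries ℤ := PowerSeries.X

/-- The equidimensional part `U_S(I)` of (a minimal primary decomposition of) `I`:
the intersection of the primary components `I(p)` over the associated primes `p`
with `dim S/p = dim S/I`.  Any such `p` is a minimal prime of `I`, so its primary
component is independent of the decomposition and equals the saturation
`{x | ∃ s ∉ p, s * x ∈ I}`. -/
def USideal {R : Type} [CommRing R] (I : Ideal R) : Ideal R :=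
  sInf {J | ∃ p ∈ associatedPrimes R (R ⧸ I),
    ringKrullDim (R ⧸ p) = ringKrullDim (R ⧸ I) ∧
    J = Ideal.span {x | ∃ s ∉ p, s * x ∈ I}}

/-- `Ext_S^j(S/I, S)`, as an object of `ModuleCat S`.  The `i`-th module of
deficiency of `S/I` is `ω^i(S/I) = Ext_S^{2n-i}(S/I, S)`, i.e. `extSI K I (2*n - i)`. -/
def extSI (K : Type) [Field K] {σ : Type} (I : Ideal (MvPolynomial σ K)) (j : ℕ) :
    ModuleCat (MvPolynomial σ K) :=
  ((Ext (MvPolynomial σ K) (ModuleCat (MvPolynomial σ K)) j).obj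
      (op (ModuleCat.of (MvPolynomial σ K) (MvPolynomial σ K ⧸ I)))).obj
    (ModuleCat.of (MvPolynomial σ K) (MvPolynomial σ K))

/-- The line (path) graph on `[n]` (with `[n]` realized as `Fin n`), with edges
`{i, i+1}` for `1 ≤ i ≤ n-1`. -/
def lineG (n : ℕ) : SimpleGraph (Fin n) :=
  SimpleGraph.fromRel (fun a b => (b : ℕ) = (a : ℕ) + 1)

/-- The cycle of length `n` on `[n]` (with `[n]` realized as `Fin n`), with edges
`{i, i+1}` for `1 ≤ i ≤ n-1` together with `{1, n}`. -/
def cycleG (n : ℕ) : SimpleGraph (Fin n) :=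
  SimpleGraph.fromRel (fun a b =>
    (b : ℕ) = (a : ℕ) + 1 ∨ ((a : ℕ) = 0 ∧ (b : ℕ) = n - 1))

/-- The binomial `g = x_1 y_n - x_n y_1`. -/
def gElt (K : Type) [Field K] {n : ℕ} (hn : 0 < n) : MvPolynomial (Fin n ⊕ Fin n) K :=
  xv K ⟨0, hn⟩ * yv K ⟨n - 1, by omega⟩ - xv K ⟨n - 1, by omega⟩ * yv K ⟨0, hn⟩

/-- The `i`-th generator `x_2 x_3 ⋯ x_i y_{i+1} ⋯ y_{n-1}` (for `i = 1, …, n-1`)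
of the monomial ideal `M`; the product ranges over the labels `p = 2, …, n-1`
(`0`-indexed: `q = p - 1` with `1 ≤ q ≤ n-2`), taking `x_p` when `p ≤ i` and
`y_p` when `p > i`. -/
def mgen (K : Type) [Field K] (n : ℕ) (i : ℕ) : MvPolynomial (Fin n ⊕ Fin n) K :=
  ∏ q ∈ Finset.univ.filter (fun q : Fin n => 0 < (q : ℕ) ∧ (q : ℕ) < n - 1),
    (if (q : ℕ) + 1 ≤ i then xv K q else yv K q)

/-- The monomial ideal
`M = (x_2 x_3 ⋯ x_{n-1}, x_2 x_3 ⋯ x_{n-2} y_{n-1}, …, x_2 y_3 ⋯ y_{n-1}, y_2 y_3 ⋯ y_{n-1})`. -/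
def monoM (K : Type) [Field K] (n : ℕ) : Ideal (MvPolynomial (Fin n ⊕ Fin n) K) :=
  Ideal.span {f | ∃ i : ℕ, 1 ≤ i ∧ i ≤ n - 1 ∧ f = mgen K n i}

/-- The degree of a vertex, as the cardinality of its neighbor set. -/
def deg {n : ℕ} (G : SimpleGraph (Fin n)) (v : Fin n) : ℕ :=
  Nat.card (G.neighborSet v)

/-- A tree is 3-star like if no vertex has degree `≥ 4`, and either there is at most
one vertex of degree `3`, or there are exactly two vertices of degree `3` and they
are joined by an edge. -/
def ThreeStarLike {n : ℕ} (G : SimpleGraph (Fin n)) : Prop :=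
  (∀ v, deg G v ≤ 3) ∧
    ({v | deg G v = 3}.Subsingleton ∨
      ∃ a b : Fin n, a ≠ b ∧ G.Adj a b ∧ {v | deg G v = 3} = {a, b})

/-- The graph `G′` on `[n+1]` obtained from a graph `G` on `[n]` by attaching the
new edge `{v, n+1}` at the vertex `v` of `G`. -/
def extendG {n : ℕ} (G : SimpleGraph (Fin n)) (v : Fin n) : SimpleGraph (Fin (n + 1)) :=
  SimpleGraph.fromRel (fun a b =>
    (∃ (ha : a ≠ Fin.last n) (hb : b ≠ Fin.last n),
      G.Adj (a.castPred ha) (b.castPred hb)) ∨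
    (a = Fin.castSucc v ∧ b = Fin.last n))

/-- The inclusion `S = K[x_1,…,x_n,y_1,…,y_n] → S′ = K[x_1,…,x_{n+1},y_1,…,y_{n+1}]`. -/
def liftS (K : Type) [Field K] (n : ℕ) :
    MvPolynomial (Fin n ⊕ Fin n) K →ₐ[K] MvPolynomial (Fin (n + 1) ⊕ Fin (n + 1)) K :=
  rename (Sum.map Fin.castSucc Fin.castSucc)

/-! ### Depth through vanishing of `Ext` -/

/-- `HasDepth I k M` says that `Ext^i(R/I, M)` vanishes for all `i < k`. For `M` finite over a
Noetherian ring with `I M ≠ M` this means that `I` contains an `M`-regular sequence of length `k`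
(`HasDepth.exists_isRegular`); the vanishing condition behaves well along short exact
sequences. -/
def HasDepth {R : Type} [CommRing R] (I : Ideal R) (k : ℕ) (M : Type) [AddCommGroup M]
    [Module R M] : Prop :=
  ∀ i < k, Subsingleton (Abelian.Ext (ModuleCat.of R (R ⧸ I)) (ModuleCat.of R M) i)

section ExtDepth

variable {R : Type} [CommRing R] {I : Ideal R} {A B C : Type}
  [AddCommGroup A] [Module R A] [AddCommGroup B] [Module R B] [AddCommGroup C] [Module R C]

lemma HasDepth.mono {k l : ℕ} (h : HasDepth I k A) (hl : l ≤ k) : HasDepth I l A :=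
  fun i hi => h i (hi.trans_le hl)

lemma HasDepth.of_equiv {k : ℕ} (e : A ≃ₗ[R] B) (h : HasDepth I k A) : HasDepth I k B := by
  intro i hi
  have := h i hi
  have key : ∀ a : Abelian.Ext (ModuleCat.of R (R ⧸ I)) (ModuleCat.of R B) i, a = 0 := by
    intro a
    have h1 : a.comp (Abelian.Ext.mk₀ e.toModuleIso.inv) (add_zero i) = 0 :=
      Subsingleton.elim _ _
    have h2 : (a.comp (Abelian.Ext.mk₀ e.toModuleIso.inv) (add_zero i)).comp
      (Abelian.Ext.mk₀ e.toModuleIso.hom) (add_zero i) = a := by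
      rw [Abelian.Ext.comp_assoc_of_second_deg_zero, Abelian.Ext.mk₀_comp_mk₀,
        Iso.inv_hom_id, Abelian.Ext.comp_mk₀_id]
    rw [← h2, h1, Abelian.Ext.zero_comp]
  exact ⟨fun a b => by rw [key a, key b]⟩

/-- If the first map of a short exact sequence kills `Ext^i(N, -)` and `Ext^{i-1}(N, -)` of the
third term vanishes, then so does `Ext^i(N, -)` of the first term. -/
lemma ext_left_subsingleton {S : ShortComplex (ModuleCat R)} (hS : S.ShortExact) (N : ModuleCat R)
    (i : ℕ) (hz : ∀ a : Abelian.Ext N S.X₁ i, a.comp (Abelian.Ext.mk₀ S.f) (add_zero i) = 0)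
    (h3 : ∀ j < i, Subsingleton (Abelian.Ext N S.X₃ j)) : Subsingleton (Abelian.Ext N S.X₁ i) := by
  have key : ∀ a : Abelian.Ext N S.X₁ i, a = 0 := by
    intro a
    rcases i with _ | i
    · obtain ⟨φ, rfl⟩ := (Abelian.Ext.mk₀_bijective _ _).2 a
      have h0 := hz (Abelian.Ext.mk₀ φ)
      rw [Abelian.Ext.mk₀_comp_mk₀] at h0
      have h1 : φ ≫ S.f = 0 := by
        apply (Abelian.Ext.mk₀_bijective _ _).1
        rw [h0, Abelian.Ext.mk₀_zero]
      have := hS.mono_f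
      have h2 : φ = 0 := by
        rw [← cancel_mono S.f, h1, Limits.zero_comp]
      rw [h2, Abelian.Ext.mk₀_zero]
    · have := h3 i (by omega)
      obtain ⟨x, hx⟩ := Abelian.Ext.covariant_sequence_exact₁ _ hS a (hz a) rfl
      rw [← hx, Subsingleton.elim x 0, Abelian.Ext.zero_comp]
  exact ⟨fun a b => by rw [key a, key b]⟩

lemma ext_middle_subsingleton {S : ShortComplex (ModuleCat R)} (hS : S.ShortExact)
    (N : ModuleCat R) (i : ℕ) (h1 : Subsingleton (Abelian.Ext N S.X₁ i))
    (h3 : Subsingleton (Abelian.Ext N S.X₃ i)) : Subsingleton (Abelian.Ext N S.X₂ i) := by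
  have key : ∀ a : Abelian.Ext N S.X₂ i, a = 0 := by
    intro a
    obtain ⟨x, hx⟩ := Abelian.Ext.covariant_sequence_exact₂ _ hS a (Subsingleton.elim _ _)
    rw [← hx, Subsingleton.elim x 0, Abelian.Ext.zero_comp]
  exact ⟨fun a b => by rw [key a, key b]⟩

lemma ext_right_subsingleton {S : ShortComplex (ModuleCat R)} (hS : S.ShortExact)
    (N : ModuleCat R) (i : ℕ) (h1 : Subsingleton (Abelian.Ext N S.X₁ (i + 1)))
    (h2 : Subsingleton (Abelian.Ext N S.X₂ i)) : Subsingleton (Abelian.Ext N S.X₃ i) := by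
  have key : ∀ a : Abelian.Ext N S.X₃ i, a = 0 := by
    intro a
    obtain ⟨x, hx⟩ := Abelian.Ext.covariant_sequence_exact₃ _ hS a rfl (Subsingleton.elim _ _)
    rw [← hx, Subsingleton.elim x 0, Abelian.Ext.zero_comp]
  exact ⟨fun a b => by rw [key a, key b]⟩

/-- The short exact sequence of modules attached to an injection and a surjection. -/
def sesOf (f : A →ₗ[R] B) (g : B →ₗ[R] C) (h : Function.Exact f g) :
    ShortComplex (ModuleCat R) :=
  ShortComplex.mk (ModuleCat.ofHom f) (ModuleCat.ofHom g) (by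
    ext x; exact (h (f x)).2 ⟨x, rfl⟩)

lemma sesOf_shortExact (f : A →ₗ[R] B) (g : B →ₗ[R] C) (h : Function.Exact f g)
    (hf : Function.Injective f) (hg : Function.Surjective g) : (sesOf f g h).ShortExact where
  exact := (ShortComplex.moduleCat_exact_iff _).2 fun x hx => (h x).1 hx
  mono_f := (ModuleCat.mono_iff_injective _).2 hf
  epi_g := (ModuleCat.epi_iff_surjective _).2 hg

lemma HasDepth.left (f : A →ₗ[R] B) (g : B →ₗ[R] C) (h : Function.Exact f g)
    (hf : Function.Injective f) (hg : Function.Surjective g) {k : ℕ}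
    (hB : HasDepth I (k + 1) B) (hC : HasDepth I k C) : HasDepth I (k + 1) A := fun i hi =>
  ext_left_subsingleton (sesOf_shortExact f g h hf hg) _ i
    (fun _ => (hB i hi).elim _ _) (fun j hj => hC j (by omega))

lemma HasDepth.middle (f : A →ₗ[R] B) (g : B →ₗ[R] C) (h : Function.Exact f g)
    (hf : Function.Injective f) (hg : Function.Surjective g) {k : ℕ}
    (hA : HasDepth I k A) (hC : HasDepth I k C) : HasDepth I k B := fun i hi =>
  ext_middle_subsingleton (sesOf_shortExact f g h hf hg) _ i (hA i hi) (hC i hi)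

lemma HasDepth.right (f : A →ₗ[R] B) (g : B →ₗ[R] C) (h : Function.Exact f g)
    (hf : Function.Injective f) (hg : Function.Surjective g) {k : ℕ}
    (hA : HasDepth I (k + 1) A) (hB : HasDepth I k B) : HasDepth I k C := fun i hi =>
  ext_right_subsingleton (sesOf_shortExact f g h hf hg) _ i (hA (i + 1) (by omega)) (hB i hi)

lemma HasDepth.prod {k : ℕ} (hA : HasDepth I k A) (hB : HasDepth I k B) :
    HasDepth I k (A × B) :=
  HasDepth.middle (LinearMap.inl R A B) (LinearMap.snd R A B)
    (fun x => ⟨fun h => ⟨x.1, by ext <;> simp_all⟩, by rintro ⟨y, rfl⟩; simp⟩)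
    LinearMap.inl_injective LinearMap.snd_surjective hA hB

/-- An `M`-regular element of `I` raises the depth by one; the injection `A → A` is
multiplication by `r`, which acts as zero on `Ext(R/I, A)`. -/
lemma HasDepth.of_regular {r : R} (hr : r ∈ I) (hreg : IsSMulRegular A r) (g : A →ₗ[R] C)
    (hg : Function.Surjective g) (hex : Function.Exact (r • (LinearMap.id : A →ₗ[R] A)) g)
    {k : ℕ} (hC : HasDepth I k C) : HasDepth I (k + 1) A := by
  have hS := sesOf_shortExact (r • (LinearMap.id : A →ₗ[R] A)) g hex
    (fun x y h => hreg (by simpa using h)) hg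
  intro i hi
  refine ext_left_subsingleton hS _ i (fun a => ?_) (fun j hj => hC j (by omega))
  have h1 : r ∈ Module.annihilator R (ModuleCat.of R (R ⧸ I)) := by
    change r ∈ Module.annihilator R (R ⧸ I)
    rwa [Ideal.annihilator_quotient]
  have h2 := Abelian.Ext.postcomp_smul_id_eq_zero_of_mem_annihilator
    (M := ModuleCat.of R A) h1 i
  exact congrArg (fun φ => φ.hom a) h2

lemma HasDepth.exists_isRegular [IsNoetherianRing R] [Module.Finite R A] {k : ℕ}
    (h : HasDepth I k A) (hlt : I • (⊤ : Submodule R A) < ⊤) :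
    ∃ rs : List R, rs.length = k ∧ (∀ r ∈ rs, r ∈ I) ∧ RingTheory.Sequence.IsRegular A rs := by
  have : Module.Finite R (ModuleCat.of R A) := ‹Module.Finite R A›
  have : Module.Finite R (ModuleCat.of R (R ⧸ I)) := inferInstanceAs (Module.Finite R (R ⧸ I))
  refine ModuleCat.exists_isRegular_of_exists_subsingleton_ext I k (ModuleCat.of R A) hlt
    (ModuleCat.of R (R ⧸ I)) ?_ h
  change Module.support R (R ⧸ I) = _
  rw [Module.support_eq_zeroLocus, Ideal.annihilator_quotient]

end ExtDepth

section IdealDepth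

variable {R : Type} [CommRing R] {m : Ideal R}

/-- Depth along `0 → R/(I₁ ∩ I₂) → R/I₁ × R/I₂ → R/(I₁ + I₂) → 0`. -/
lemma HasDepth.inf {I₁ I₂ : Ideal R} {k : ℕ} (h₁ : HasDepth m (k + 1) (R ⧸ I₁))
    (h₂ : HasDepth m (k + 1) (R ⧸ I₂)) (h₃ : HasDepth m k (R ⧸ (I₁ ⊔ I₂))) :
    HasDepth m (k + 1) (R ⧸ (I₁ ⊓ I₂)) := by
  let f : (R ⧸ (I₁ ⊓ I₂)) →ₗ[R] (R ⧸ I₁) × (R ⧸ I₂) :=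
    (Submodule.factor (inf_le_left : I₁ ⊓ I₂ ≤ I₁)).prod (Submodule.factor inf_le_right)
  let g : (R ⧸ I₁) × (R ⧸ I₂) →ₗ[R] R ⧸ (I₁ ⊔ I₂) :=
    (Submodule.factor (le_sup_left : I₁ ≤ I₁ ⊔ I₂)).coprod (-(Submodule.factor le_sup_right))
  refine HasDepth.left f g ?_ ?_ ?_ (h₁.prod h₂) h₃
  · rintro ⟨x, y⟩
    obtain ⟨x, rfl⟩ := Submodule.Quotient.mk_surjective _ x
    obtain ⟨y, rfl⟩ := Submodule.Quotient.mk_surjective _ y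
    have hg : g (Submodule.Quotient.mk x, Submodule.Quotient.mk y) =
        Submodule.Quotient.mk (x - y) := by
      simp [g, LinearMap.coprod_apply, sub_eq_add_neg]
    rw [hg, Submodule.Quotient.mk_eq_zero, Submodule.mem_sup]
    constructor
    · rintro ⟨a, ha, b, hb, hab⟩
      refine ⟨Submodule.Quotient.mk (x - a), Prod.ext ?_ ?_⟩
      · change Submodule.Quotient.mk (x - a) = Submodule.Quotient.mk x
        rw [Submodule.Quotient.eq]
        simpa using ha
      · change Submodule.Quotient.mk (x - a) = Submodule.Quotient.mk y
        rw [Submodule.Quotient.eq]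
        have : x - a - y = b := by linear_combination -hab
        rwa [this]
    · rintro ⟨z, hz⟩
      obtain ⟨z, rfl⟩ := Submodule.Quotient.mk_surjective _ z
      have h1 : (Submodule.Quotient.mk z : R ⧸ I₁) = Submodule.Quotient.mk x := congrArg Prod.fst hz
      have h2 : (Submodule.Quotient.mk z : R ⧸ I₂) = Submodule.Quotient.mk y := congrArg Prod.snd hz
      rw [Submodule.Quotient.eq] at h1 h2
      exact ⟨x - z, by simpa using I₁.neg_mem h1, z - y, h2, by ring⟩
  · rw [← LinearMap.ker_eq_bot, LinearMap.ker_eq_bot']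
    intro z hz
    obtain ⟨z, rfl⟩ := Submodule.Quotient.mk_surjective _ z
    have h1 : (Submodule.Quotient.mk z : R ⧸ I₁) = 0 := congrArg Prod.fst hz
    have h2 : (Submodule.Quotient.mk z : R ⧸ I₂) = 0 := congrArg Prod.snd hz
    rw [Submodule.Quotient.mk_eq_zero] at h1 h2 ⊢
    exact ⟨h1, h2⟩
  · intro z
    obtain ⟨z, rfl⟩ := Submodule.Quotient.mk_surjective _ z
    refine ⟨(Submodule.Quotient.mk z, 0), ?_⟩
    simp [g, LinearMap.coprod_apply]

lemma HasDepth.quot_of_regular {J : Ideal R} {f : R} (hf : f ∈ m)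
    (hreg : ∀ g, f * g ∈ J → g ∈ J) {k : ℕ} (h : HasDepth m k (R ⧸ (J ⊔ Ideal.span {f}))) :
    HasDepth m (k + 1) (R ⧸ J) := by
  refine HasDepth.of_regular hf ?_ (Submodule.factor (le_sup_left : J ≤ J ⊔ Ideal.span {f}))
    (Submodule.factor_surjective _) ?_ h
  · rw [isSMulRegular_iff_right_eq_zero_of_smul]
    intro x hx
    obtain ⟨x, rfl⟩ := Submodule.Quotient.mk_surjective _ x
    rw [← Submodule.Quotient.mk_smul, Submodule.Quotient.mk_eq_zero] at hx
    rw [Submodule.Quotient.mk_eq_zero]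
    exact hreg _ hx
  · intro x
    obtain ⟨x, rfl⟩ := Submodule.Quotient.mk_surjective _ x
    change Submodule.Quotient.mk x = 0 ↔ _
    rw [Submodule.Quotient.mk_eq_zero, Submodule.mem_sup]
    constructor
    · rintro ⟨a, ha, b, hb, hab⟩
      obtain ⟨c, rfl⟩ := Ideal.mem_span_singleton'.1 hb
      refine ⟨Submodule.Quotient.mk c, ?_⟩
      change Submodule.Quotient.mk (f * c) = Submodule.Quotient.mk x
      rw [Submodule.Quotient.eq]
      have : f * c - x = -a := by linear_combination hab
      rw [this]; exact J.neg_mem ha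
    · rintro ⟨z, hz⟩
      obtain ⟨z, rfl⟩ := Submodule.Quotient.mk_surjective _ z
      change Submodule.Quotient.mk (f * z) = Submodule.Quotient.mk x at hz
      rw [Submodule.Quotient.eq] at hz
      exact ⟨x - f * z, by simpa using J.neg_mem hz, f * z,
        Ideal.mem_span_singleton'.2 ⟨z, mul_comm _ _⟩, by ring⟩

/-- Depth along `0 → R/U → R/J → R/(J + f) → 0`, where `U = (J : f)`. -/
lemma HasDepth.quot_of_colon {J U : Ideal R} {f : R} (hU : ∀ g, f * g ∈ J ↔ g ∈ U) {k : ℕ}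
    (h₁ : HasDepth m (k + 1) (R ⧸ U)) (h₂ : HasDepth m k (R ⧸ J)) :
    HasDepth m k (R ⧸ (J ⊔ Ideal.span {f})) := by
  let φ : (R ⧸ U) →ₗ[R] R ⧸ J := Submodule.mapQ U J (f • LinearMap.id) (fun g hg => by
    change f * g ∈ J
    exact (hU g).2 hg)
  refine HasDepth.right φ (Submodule.factor (le_sup_left : J ≤ J ⊔ Ideal.span {f})) ?_ ?_
    (Submodule.factor_surjective _) h₁ h₂
  · intro x
    obtain ⟨x, rfl⟩ := Submodule.Quotient.mk_surjective _ x
    change Submodule.Quotient.mk x = 0 ↔ _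
    rw [Submodule.Quotient.mk_eq_zero, Submodule.mem_sup]
    constructor
    · rintro ⟨a, ha, b, hb, hab⟩
      obtain ⟨c, rfl⟩ := Ideal.mem_span_singleton'.1 hb
      refine ⟨Submodule.Quotient.mk c, ?_⟩
      change Submodule.Quotient.mk (f * c) = Submodule.Quotient.mk x
      rw [Submodule.Quotient.eq]
      have : f * c - x = -a := by linear_combination hab
      rw [this]; exact J.neg_mem ha
    · rintro ⟨z, hz⟩
      obtain ⟨z, rfl⟩ := Submodule.Quotient.mk_surjective _ z
      change Submodule.Quotient.mk (f * z) = Submodule.Quotient.mk x at hz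
      rw [Submodule.Quotient.eq] at hz
      exact ⟨x - f * z, by simpa using J.neg_mem hz, f * z,
        Ideal.mem_span_singleton'.2 ⟨z, mul_comm _ _⟩, by ring⟩
  · rw [← LinearMap.ker_eq_bot, LinearMap.ker_eq_bot']
    intro z hz
    obtain ⟨z, rfl⟩ := Submodule.Quotient.mk_surjective _ z
    change Submodule.Quotient.mk (f * z) = 0 at hz
    rw [Submodule.Quotient.mk_eq_zero] at hz ⊢
    exact (hU z).1 hz

lemma exact_map_mkQ {I J : Ideal R} (hIJ : I ≤ J) :
    Function.Exact (Submodule.map I.mkQ J).subtype (Submodule.factor hIJ) := by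
  intro x
  obtain ⟨x, rfl⟩ := Submodule.Quotient.mk_surjective _ x
  change Submodule.Quotient.mk x = 0 ↔ _
  rw [Submodule.Quotient.mk_eq_zero]
  constructor
  · intro hx
    exact ⟨⟨_, Submodule.mem_map_of_mem hx⟩, rfl⟩
  · rintro ⟨⟨_, z, hz, rfl⟩, h⟩
    change Submodule.Quotient.mk z = Submodule.Quotient.mk x at h
    rw [Submodule.Quotient.eq] at h
    have : x = z - (z - x) := by ring
    rw [this]
    exact J.sub_mem hz (hIJ h)

/-- If `a J + I = b M + I` with `a`, `b` regular modulo `I`, then `J/I ≅ M/I`, so that the depths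
of `R/J` and `R/M` are related when that of `R/I` is larger. -/
lemma HasDepth.linkage {I J M : Ideal R} (hIJ : I ≤ J) (hIM : I ≤ M) {a b : R}
    (ha : ∀ g, a * g ∈ I → g ∈ I) (hb : ∀ g, b * g ∈ I → g ∈ I)
    (h₁ : ∀ g ∈ J, ∃ c ∈ M, a * g - b * c ∈ I) (h₂ : ∀ c ∈ M, ∃ g ∈ J, a * g - b * c ∈ I)
    {k : ℕ} (hI : HasDepth m (k + 1) (R ⧸ I)) (hM : HasDepth m k (R ⧸ M)) :
    HasDepth m k (R ⧸ J) := by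
  have inj : ∀ c : R, (∀ g, c * g ∈ I → g ∈ I) →
      Function.Injective (c • (LinearMap.id : (R ⧸ I) →ₗ[R] R ⧸ I)) := by
    intro c hc
    rw [← LinearMap.ker_eq_bot, LinearMap.ker_eq_bot']
    intro z hz
    obtain ⟨z, rfl⟩ := Submodule.Quotient.mk_surjective _ z
    change Submodule.Quotient.mk (c * z) = 0 at hz
    rw [Submodule.Quotient.mk_eq_zero] at hz ⊢
    exact hc z hz
  have hM' : HasDepth m (k + 1) (Submodule.map I.mkQ M) :=
    HasDepth.left _ _ (exact_map_mkQ hIM) (Submodule.subtype_injective _)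
      (Submodule.factor_surjective _) hI hM
  have heq : Submodule.map (a • (LinearMap.id : (R ⧸ I) →ₗ[R] R ⧸ I)) (Submodule.map I.mkQ J) =
      Submodule.map (b • (LinearMap.id : (R ⧸ I) →ₗ[R] R ⧸ I)) (Submodule.map I.mkQ M) := by
    apply le_antisymm
    · rintro _ ⟨_, ⟨g, hg, rfl⟩, rfl⟩
      obtain ⟨c, hc, h⟩ := h₁ g hg
      refine ⟨_, ⟨c, hc, rfl⟩, ?_⟩
      exact ((Submodule.Quotient.eq I).2 h).symm
    · rintro _ ⟨_, ⟨c, hc, rfl⟩, rfl⟩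
      obtain ⟨g, hg, h⟩ := h₂ c hc
      refine ⟨_, ⟨g, hg, rfl⟩, ?_⟩
      exact (Submodule.Quotient.eq I).2 h
  have e : (Submodule.map I.mkQ M) ≃ₗ[R] (Submodule.map I.mkQ J) :=
    (Submodule.equivMapOfInjective _ (inj b hb) _) ≪≫ₗ LinearEquiv.ofEq _ _ heq.symm ≪≫ₗ
      (Submodule.equivMapOfInjective _ (inj a ha) _).symm
  exact HasDepth.right _ _ (exact_map_mkQ hIJ) (Submodule.subtype_injective _)
      (Submodule.factor_surjective _) (hM'.of_equiv e) (hI.mono (by omega))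

end IdealDepth

/-! ### Depth is bounded by the dimension of associated primes -/

section DepthDim

variable {R : Type} [CommRing R]

lemma dim_succ_le_of_lt {P Q : Ideal R} [P.IsPrime] (h : P < Q) :
    ringKrullDim (R ⧸ Q) + 1 ≤ ringKrullDim (R ⧸ P) := by
  obtain ⟨x, hx, hxP⟩ := SetLike.exists_of_lt h
  refine ringKrullDim_succ_le_of_surjective (Ideal.Quotient.factor h.le)
    (Ideal.Quotient.factor_surjective _) (r := Ideal.Quotient.mk P x) ?_ ?_
  · apply mem_nonZeroDivisors_of_ne_zero
    rwa [Ne, Ideal.Quotient.eq_zero_iff_mem]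
  · simpa [Ideal.Quotient.eq_zero_iff_mem] using hx

lemma dim_quot_anti {I J : Ideal R} (h : I ≤ J) :
    ringKrullDim (R ⧸ J) ≤ ringKrullDim (R ⧸ I) :=
  ringKrullDim_le_of_surjective (Ideal.Quotient.factor h) (Ideal.Quotient.factor_surjective _)

lemma smul_top_lt {m J : Ideal R} [hm : m.IsPrime] (hJ : J ≤ m) :
    m • (⊤ : Submodule R (R ⧸ J)) < ⊤ := by
  rw [lt_top_iff_ne_top]
  intro h
  have h1 : (Submodule.Quotient.mk 1 : R ⧸ J) ∈ m • (⊤ : Submodule R (R ⧸ J)) := by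
    rw [h]; trivial
  have h2 : m • (⊤ : Submodule R (R ⧸ J)) ≤ Submodule.map J.mkQ m := by
    rw [Submodule.smul_le]
    rintro r hr z -
    obtain ⟨z, rfl⟩ := Submodule.Quotient.mk_surjective _ z
    exact ⟨r * z, m.mul_mem_right _ hr, rfl⟩
  obtain ⟨z, hz, hz1⟩ := h2 h1
  have h3 := (Submodule.Quotient.eq J).1 hz1
  apply hm.ne_top
  rw [Ideal.eq_top_iff_one]
  have : (1 : R) = z - (z - 1) := by ring
  rw [this]
  exact m.sub_mem hz (hJ h3)

variable [IsNoetherianRing R]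

/-- An element whose annihilator lies in the prime `m` has a multiple whose annihilator is a prime
contained in `m`. -/
lemma exists_ann_prime {m : Ideal R} [hm : m.IsPrime] {M : Type} [AddCommGroup M] [Module R M]
    (x : M) (hx : ∀ r : R, r • x = 0 → r ∈ m) :
    ∃ (y : M) (Q : Ideal R), Q.IsPrime ∧ (∀ r : R, r • y = 0 ↔ r ∈ Q) ∧
      (∀ r : R, r • x = 0 → r ∈ Q) ∧ Q ≤ m := by
  let ann : M → Ideal R := fun y => LinearMap.ker (LinearMap.toSpanSingleton R M y)
  have hann : ∀ y r, r ∈ ann y ↔ r • y = 0 := fun y r => by simp [ann]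
  obtain ⟨Q, ⟨y, rfl, hxy, hym⟩, hmax⟩ := set_has_maximal_iff_noetherian.2
    (inferInstance : IsNoetherian R R) {Q | ∃ y, ann y = Q ∧ ann x ≤ Q ∧ Q ≤ m}
    ⟨ann x, x, rfl, le_rfl, fun r hr => hx r ((hann x r).1 hr)⟩
  have hsm : ∀ c : R, ann y ≤ ann (c • y) := fun c r hr => by
    rw [hann] at hr ⊢
    rw [smul_comm, hr, smul_zero]
  have hmax' : ∀ c : R, ann (c • y) ≤ m → ∀ r : R, r • c • y = 0 → r • y = 0 := by
    intro c hc r hr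
    by_contra hry
    refine hmax (ann (c • y)) ⟨_, rfl, hxy.trans (hsm c), hc⟩ (lt_of_le_of_ne (hsm c) ?_)
    intro heq
    have : r ∈ ann (c • y) := (hann _ _).2 hr
    rw [← heq, hann] at this
    exact hry this
  refine ⟨y, ann y, ⟨?_, ?_⟩, fun r => (hann y r).symm, fun r hr => hxy ((hann x r).2 hr), hym⟩
  · intro h
    rw [h] at hym
    exact hm.ne_top (top_le_iff.1 hym)
  · intro a b hab
    rw [hann] at hab
    by_cases hb : ann (b • y) ≤ m
    · left
      exact (hann _ _).2 (hmax' b hb a (by rwa [smul_smul]))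
    · right
      obtain ⟨s, hs, hsm'⟩ := SetLike.not_le_iff_exists.1 hb
      rw [hann] at hs
      rw [hann]
      refine hmax' s (fun r hr => ?_) b (by rw [smul_comm]; exact hs)
      rw [hann, smul_smul] at hr
      exact (hm.mem_or_mem (hym ((hann _ _).2 hr))).resolve_right hsm'

/-- Passing to `M/xM` for a regular element `x` enlarges associated primes. -/
lemma exists_ann_prime_quot {m : Ideal R} [hm : m.IsPrime] {M : Type} [AddCommGroup M]
    [Module R M] [Module.Finite R M] {P : Ideal R} {y : M} (hy : ∀ r : R, r • y = 0 ↔ r ∈ P)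
    (hPm : P ≤ m) {x : R} (hx : IsSMulRegular M x) (hxm : x ∈ m) :
    ∃ (z : QuotSMulTop x M) (Q : Ideal R), Q.IsPrime ∧ (∀ r : R, r • z = 0 ↔ r ∈ Q) ∧
      P ≤ Q ∧ x ∈ Q ∧ Q ≤ m := by
  let N : Submodule R M :=
    { carrier := {n | ∀ p ∈ P, p • n = 0}
      add_mem' := fun ha hb p hp => by rw [smul_add, ha p hp, hb p hp, add_zero]
      zero_mem' := fun p _ => smul_zero p
      smul_mem' := fun c n hn p hp => by rw [smul_comm, hn p hp, smul_zero] }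
  have hyN : y ∈ N := fun p hp => (hy p).2 hp
  have main : ∃ n ∈ N, ∀ s u, s ∉ m → s • n ≠ x • u := by
    by_contra hcon
    push Not at hcon
    have hloc : ∃ s, s ∉ m ∧ ∀ n ∈ N, ∃ u ∈ N, s • n = x • u := by
      obtain ⟨t, ht⟩ := IsNoetherian.noetherian N
      have htN : ∀ n ∈ t, n ∈ N := fun n hn => ht ▸ Submodule.subset_span hn
      have : ∀ n : M, ∃ s, n ∈ N → s ∉ m ∧ ∃ u, s • n = x • u := by
        intro n
        by_cases hn : n ∈ N
        · obtain ⟨s, u, hs, h⟩ := hcon n hn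
          exact ⟨s, fun _ => ⟨hs, u, h⟩⟩
        · exact ⟨0, fun h => absurd h hn⟩
      choose s hs using this
      have hs' : ∏ n ∈ t, s n ∉ m := by
        rw [Ideal.IsPrime.prod_mem_iff]
        rintro ⟨n, hn, h⟩
        exact (hs n (htN n hn)).1 h
      refine ⟨∏ n ∈ t, s n, hs', ?_⟩
      have key : ∀ n ∈ N, ∃ u, (∏ n ∈ t, s n) • n = x • u := by
        intro n hn
        rw [← ht] at hn
        induction hn using Submodule.span_induction with
        | mem n hn =>
          obtain ⟨u, hu⟩ := (hs n (htN n hn)).2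
          classical
          refine ⟨(∏ n' ∈ t.erase n, s n') • u, ?_⟩
          rw [← Finset.prod_erase_mul t s hn, mul_smul, hu, smul_comm]
        | zero => exact ⟨0, by simp⟩
        | add a b _ _ ha hb =>
          obtain ⟨u, hu⟩ := ha
          obtain ⟨v, hv⟩ := hb
          exact ⟨u + v, by rw [smul_add, hu, hv, smul_add]⟩
        | smul c a _ ha =>
          obtain ⟨u, hu⟩ := ha
          exact ⟨c • u, by rw [smul_comm, hu, smul_comm]⟩
      intro n hn
      obtain ⟨u, hu⟩ := key n hn
      refine ⟨u, fun p hp => hx ?_, hu⟩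
      change x • p • u = x • 0
      rw [smul_zero, smul_comm, ← hu, smul_comm, hn p hp, smul_zero]
    obtain ⟨s, hsm, hs⟩ := hloc
    obtain ⟨p, hmon, -, hcoeff, hp⟩ :=
      LinearMap.exists_monic_and_natDegree_eq_and_coeff_mem_pow_and_aeval_eq_zero
        R (s • (LinearMap.id : N →ₗ[R] N)) (Ideal.span {x}) (by
          rintro _ ⟨n, rfl⟩
          obtain ⟨u, hu, h⟩ := hs n n.2
          have : (s • (LinearMap.id : N →ₗ[R] N)) n = x • (⟨u, hu⟩ : N) := Subtype.ext h
          rw [this]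
          exact Submodule.smul_mem_smul (Ideal.mem_span_singleton_self x) trivial)
    have h1 : p.eval s ∈ P := by
      rw [← hy]
      have h2 : s • (LinearMap.id : N →ₗ[R] N) = algebraMap R (Module.End R N) s := by
        rw [Algebra.algebraMap_eq_smul_one]; rfl
      rw [h2, Polynomial.aeval_algebraMap_apply, Polynomial.coe_aeval_eq_eval] at hp
      have h3 := congrArg (fun φ : Module.End R N => ((φ ⟨y, hyN⟩ : N) : M)) hp
      simpa [Module.algebraMap_end_apply] using h3
    have h4 : s ^ p.natDegree ∈ m := by
      have h5 := hPm h1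
      rw [Polynomial.eval_eq_sum_range, Finset.sum_range_succ, hmon.coeff_natDegree, one_mul] at h5
      refine (Ideal.add_mem_iff_right _ ?_).1 h5
      refine Ideal.sum_mem _ fun i hi => Ideal.mul_mem_right _ _ ?_
      have h6 := Ideal.pow_le_self (I := Ideal.span {x})
        (Nat.sub_ne_zero_of_lt (Finset.mem_range.1 hi)) (hcoeff i)
      exact (Ideal.span_singleton_le_iff_mem m).2 hxm h6
    exact hsm (hm.mem_of_pow_mem _ h4)
  obtain ⟨n, hnN, hn⟩ := main
  let z₀ : QuotSMulTop x M := Submodule.Quotient.mk n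
  obtain ⟨z, Q, hQ, hzQ, hle, hQm⟩ := exists_ann_prime (m := m) z₀ (by
    intro r hr
    by_contra hrm
    change Submodule.Quotient.mk (r • n) = _ at hr
    rw [Submodule.Quotient.mk_eq_zero, Submodule.mem_smul_pointwise_iff_exists] at hr
    obtain ⟨u, -, hu⟩ := hr
    exact hn r u hrm hu.symm)
  refine ⟨z, Q, hQ, hzQ, fun p hp => hle p ?_, hle x ?_, hQm⟩
  · change Submodule.Quotient.mk (p • n) = _
    rw [hnN p hp]; rfl
  · change Submodule.Quotient.mk (x • n) = _
    rw [Submodule.Quotient.mk_eq_zero]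
    exact Submodule.smul_mem_pointwise_smul _ _ _ trivial

/-- Each term of a regular sequence moves an associated prime `P` to a strictly larger one, so the
length of the sequence is at most `dim R/P`. -/
lemma length_le_dim {m : Ideal R} [hm : m.IsPrime] (rs : List R) :
    ∀ {M : Type} [AddCommGroup M] [Module R M] [Module.Finite R M] {P : Ideal R} {y : M},
    P.IsPrime → (∀ r : R, r • y = 0 ↔ r ∈ P) → P ≤ m → (∀ r ∈ rs, r ∈ m) →
    RingTheory.Sequence.IsWeaklyRegular M rs →
    (rs.length : WithBot ℕ∞) ≤ ringKrullDim (R ⧸ P) := by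
  induction rs with
  | nil =>
    intro M _ _ _ P y hP _ _ _ _
    have : Nontrivial (R ⧸ P) := Ideal.Quotient.nontrivial_iff.2 hP.ne_top
    simpa using ringKrullDim_nonneg_of_nontrivial (R := R ⧸ P)
  | cons x rs ih =>
    intro M _ _ _ P y hP hy hPm hrs hreg
    rw [RingTheory.Sequence.isWeaklyRegular_cons_iff] at hreg
    simp only [List.mem_cons, forall_eq_or_imp] at hrs
    obtain ⟨z, Q, hQ, hz, hPQ, hxQ, hQm⟩ := exists_ann_prime_quot hy hPm hreg.1 hrs.1
    have h1 := ih hQ hz hQm hrs.2 hreg.2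
    have hxP : x ∉ P := by
      rw [← hy]
      intro h
      have hy0 : y = 0 := hreg.1 (by simpa using h)
      apply hP.ne_top
      rw [Ideal.eq_top_iff_one, ← hy, hy0, smul_zero]
    have h2 := dim_succ_le_of_lt (lt_of_le_of_ne hPQ (fun h => hxP (h ▸ hxQ)))
    rw [List.length_cons]
    push_cast
    exact (by gcongr : (rs.length : WithBot ℕ∞) + 1 ≤ ringKrullDim (R ⧸ Q) + 1).trans h2

/-- Depth is at most the dimension of any associated prime contained in `m`. -/
lemma depth_le_dim_ann {m : Ideal R} [hm : m.IsPrime] {M : Type} [AddCommGroup M] [Module R M]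
    [Module.Finite R M] {P : Ideal R} {y : M} (hP : P.IsPrime) (hy : ∀ r : R, r • y = 0 ↔ r ∈ P)
    (hPm : P ≤ m) {k : ℕ} (hk : ringKrullDim (R ⧸ P) ≤ k) : depth m M ≤ k := by
  refine sSup_le ?_
  rintro _ ⟨rs, rfl, hrs, hreg⟩
  have := (length_le_dim rs hP hy hPm hrs hreg.1).trans hk
  exact_mod_cast this

lemma HasDepth.le_depth {m J : Ideal R} [hm : m.IsPrime] (hJ : J ≤ m) {k : ℕ}
    (h : HasDepth m k (R ⧸ J)) : (k : ℕ∞) ≤ depth m (R ⧸ J) := by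
  obtain ⟨rs, hlen, hrs, hreg⟩ := h.exists_isRegular (smul_top_lt hJ)
  exact le_sSup ⟨rs, by rw [hlen], hrs, hreg⟩

lemma HasDepth.le_dim {m J : Ideal R} [hm : m.IsPrime] (hJ : J ≤ m) {k : ℕ}
    (h : HasDepth m k (R ⧸ J)) : (k : WithBot ℕ∞) ≤ ringKrullDim (R ⧸ J) := by
  obtain ⟨rs, hlen, hrs, hreg⟩ := h.exists_isRegular (smul_top_lt hJ)
  have hmk : ∀ r : R, r • (Submodule.Quotient.mk 1 : R ⧸ J) = 0 ↔ r ∈ J := by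
    intro r
    rw [← Submodule.Quotient.mk_smul, Submodule.Quotient.mk_eq_zero]
    simp
  obtain ⟨y, Q, hQ, hy, hle, hQm⟩ := exists_ann_prime (m := m)
    (Submodule.Quotient.mk 1 : R ⧸ J) (fun r hr => hJ ((hmk r).1 hr))
  have h1 := length_le_dim rs hQ hy hQm hrs hreg.1
  rw [hlen] at h1
  exact h1.trans (dim_quot_anti (fun r hr => hle r ((hmk r).2 hr)))

/-- A quotient of depth at least `k` and dimension at most `k` is Cohen-Macaulay. -/
lemma depth_eq_of {m J : Ideal R} [hm : m.IsPrime] (hJ : J ≤ m) {k : ℕ}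
    (h : HasDepth m k (R ⧸ J)) (hd : ringKrullDim (R ⧸ J) ≤ k) :
    (depth m (R ⧸ J) : WithBot ℕ∞) = k ∧ ringKrullDim (R ⧸ J) = k := by
  refine ⟨le_antisymm ?_ ?_, le_antisymm hd (h.le_dim hJ)⟩
  · have hmk : ∀ r : R, r • (Submodule.Quotient.mk 1 : R ⧸ J) = 0 ↔ r ∈ J := by
      intro r
      rw [← Submodule.Quotient.mk_smul, Submodule.Quotient.mk_eq_zero]
      simp
    obtain ⟨y, Q, hQ, hy, hle, hQm⟩ := exists_ann_prime (m := m)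
      (Submodule.Quotient.mk 1 : R ⧸ J) (fun r hr => hJ ((hmk r).1 hr))
    have := depth_le_dim_ann hQ hy hQm
      ((dim_quot_anti (fun r hr => hle r ((hmk r).2 hr))).trans hd)
    exact_mod_cast this
  · have := h.le_depth hJ
    exact_mod_cast this

end DepthDim

section PolyRing

variable (K : Type) [Field K] (σ : Type)

lemma mIdeal_eq_ker : mIdeal K σ = RingHom.ker (constantCoeff : MvPolynomial σ K →+* K) := by
  apply le_antisymm
  · refine Ideal.span_le.2 ?_
    rintro _ ⟨i, rfl⟩
    simp
  · intro p hp
    rw [RingHom.mem_ker] at hp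
    rw [mIdeal, ← Set.image_univ, mem_ideal_span_X_image]
    intro s hs
    by_contra hcon
    push Not at hcon
    have : s = 0 := Finsupp.ext fun i => hcon i trivial
    subst this
    exact (mem_support_iff.1 hs) hp

instance : (mIdeal K σ).IsPrime := by
  rw [mIdeal_eq_ker]; exact RingHom.ker_isPrime _

variable {K σ}

lemma X_mem_mIdeal (s : σ) : (X s : MvPolynomial σ K) ∈ mIdeal K σ :=
  Ideal.subset_span ⟨s, rfl⟩

lemma homogeneous_mem_mIdeal {d : ℕ} (hd : 0 < d) {f : MvPolynomial σ K}
    (hf : f.IsHomogeneous d) : f ∈ mIdeal K σ := by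
  rw [mIdeal_eq_ker, RingHom.mem_ker]
  by_contra h
  have := hf h
  simp at this
  omega

end PolyRing

/-! ### Ideals of disjoint unions of cliques -/

section Clique

variable (K : Type) [Field K] {V : Type}

/-- The `2 × 2` minor `x_i y_j - x_j y_i`. -/
def minor (i j : V) : MvPolynomial (V ⊕ V) K := xv K i * yv K j - xv K j * yv K i

/-- The ideal generated by the variables in `A` and by the minors `x_i y_j - x_j y_i` with
`i, j ∈ Z` of the same colour under `κ`. -/
def cliqueI (A : Finset (V ⊕ V)) (Z : Finset V) (κ : V → V) : Ideal (MvPolynomial (V ⊕ V) K) :=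
  Ideal.span ({f | ∃ s ∈ A, f = X s} ∪ {f | ∃ i ∈ Z, ∃ j ∈ Z, κ i = κ j ∧ f = minor K i j})

variable {K}

lemma minor_self (i : V) : minor K i i = 0 := by simp [minor]

lemma minor_swap (i j : V) : minor K j i = -minor K i j := by simp [minor]

variable {A : Finset (V ⊕ V)} {Z : Finset V} {κ : V → V}

lemma X_mem_cliqueI {s : V ⊕ V} (hs : s ∈ A) : (X s : MvPolynomial (V ⊕ V) K) ∈ cliqueI K A Z κ :=
  Ideal.subset_span (Or.inl ⟨s, hs, rfl⟩)

lemma minor_mem_cliqueI {i j : V} (hi : i ∈ Z) (hj : j ∈ Z) (h : κ i = κ j) :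
    minor K i j ∈ cliqueI K A Z κ :=
  Ideal.subset_span (Or.inr ⟨i, hi, j, hj, h, rfl⟩)

lemma cliqueI_le {I : Ideal (MvPolynomial (V ⊕ V) K)} (h₁ : ∀ s ∈ A, X s ∈ I)
    (h₂ : ∀ i ∈ Z, ∀ j ∈ Z, κ i = κ j → minor K i j ∈ I) : cliqueI K A Z κ ≤ I := by
  refine Ideal.span_le.2 ?_
  rintro _ (⟨s, hs, rfl⟩ | ⟨i, hi, j, hj, h, rfl⟩)
  exacts [h₁ s hs, h₂ i hi j hj h]

lemma exists_add_single {s : V ⊕ V} {u : (V ⊕ V) →₀ ℕ} (h : u s ≠ 0) :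
    ∃ u', u = u' + Finsupp.single s 1 := by
  refine ⟨u - Finsupp.single s 1, (tsub_add_cancel_of_le ?_).symm⟩
  rw [Finsupp.single_le_iff]
  omega

variable [DecidableEq V]

/-- The exponent vector of the image of a variable under the parametrization
`x_i ↦ x_i`, `y_i ↦ x_i t_{κ(i)}` for `i ∈ Z`, `y_i ↦ y_i` otherwise. -/
def expo (Z : Finset V) (κ : V → V) : V ⊕ V → (V ⊕ (V ⊕ V)) →₀ ℕ
  | Sum.inl i => Finsupp.single (Sum.inl i) 1
  | Sum.inr i => if i ∈ Z then Finsupp.single (Sum.inl i) 1 + Finsupp.single (Sum.inr (Sum.inr (κ i))) 1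
      else Finsupp.single (Sum.inr (Sum.inl i)) 1

/-- The parametrization whose kernel is `cliqueI`. -/
def param (K : Type) [Field K] (A : Finset (V ⊕ V)) (Z : Finset V) (κ : V → V) :
    MvPolynomial (V ⊕ V) K →ₐ[K] MvPolynomial (V ⊕ (V ⊕ V)) K :=
  aeval fun s => if s ∈ A then 0 else monomial (expo Z κ s) 1

lemma param_X (s : V ⊕ V) :
    param K A Z κ (X s) = if s ∈ A then 0 else monomial (expo Z κ s) 1 := by
  rw [param, aeval_X]

variable [Fintype V]

/-- The exponent vector of the image of a monomial. -/
def expoM (Z : Finset V) (κ : V → V) (u : (V ⊕ V) →₀ ℕ) : (V ⊕ (V ⊕ V)) →₀ ℕ :=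
  ∑ s, u s • expo Z κ s

lemma expoM_add (u v : (V ⊕ V) →₀ ℕ) : expoM Z κ (u + v) = expoM Z κ u + expoM Z κ v := by
  simp [expoM, add_smul, Finset.sum_add_distrib]

lemma expoM_single (s : V ⊕ V) : expoM Z κ (Finsupp.single s 1) = expo Z κ s := by
  unfold expoM
  rw [Finset.sum_eq_single s]
  · simp
  · intro b _ hb
    rw [Finsupp.single_eq_of_ne hb, zero_smul]
  · simp

lemma expoM_ne_zero_iff (u : (V ⊕ V) →₀ ℕ) (t) :
    expoM Z κ u t ≠ 0 ↔ ∃ s, u s ≠ 0 ∧ expo Z κ s t ≠ 0 := by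
  have : expoM Z κ u t = ∑ s, u s * expo Z κ s t := by
    simp [expoM]
  rw [this, Ne, Finset.sum_eq_zero_iff]
  simp only [Finset.mem_univ, true_imp_iff, mul_eq_zero, not_forall, not_or]

/-- Exchanging `x_i y_k` for `x_k y_i` changes neither the image of a monomial nor its class. -/
lemma exists_swap {u : (V ⊕ V) →₀ ℕ} {i k : V} (hi : i ∈ Z) (hk : k ∈ Z) (hik : κ k = κ i)
    (hui : u (Sum.inl i) ≠ 0) (huk : u (Sum.inr k) ≠ 0) :
    ∃ w, w.degree = u.degree ∧ expoM Z κ w = expoM Z κ u ∧ w (Sum.inr i) ≠ 0 ∧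
      monomial u (1 : K) - monomial w 1 ∈ cliqueI K A Z κ := by
  obtain ⟨u', rfl⟩ := exists_add_single hui
  have : u' (Sum.inr k) ≠ 0 := by simpa using huk
  obtain ⟨u, rfl⟩ := exists_add_single this
  refine ⟨u + Finsupp.single (Sum.inl k) 1 + Finsupp.single (Sum.inr i) 1, ?_, ?_, ?_, ?_⟩
  · simp [map_add, Finsupp.degree_single]
  · simp only [expoM_add, expoM_single, expo, hi, hk, hik, if_true]
    abel
  · simp
  · have h1 : ∀ (a b : V ⊕ V), monomial (u + Finsupp.single a 1 + Finsupp.single b 1) (1 : K) =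
        monomial u 1 * (X a * X b) := by
      intro a b
      rw [monomial_add_single, monomial_add_single]
      ring
    rw [h1, h1, ← mul_sub]
    refine Ideal.mul_mem_left _ _ ?_
    have h2 := minor_mem_cliqueI (K := K) (A := A) (κ := κ) hi hk hik.symm
    have h3 : minor K i k = X (Sum.inr k) * X (Sum.inl i) - X (Sum.inl k) * X (Sum.inr i) := by
      simp only [minor, xv, yv]; ring
    rwa [← h3]

/-- Monomials with the same image under the parametrization agree modulo the binomials: by
`exists_swap` they can be made to share a variable, which is then cancelled. -/
lemma monomial_sub_mem (d : ℕ) : ∀ u v : (V ⊕ V) →₀ ℕ, u.degree = d →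
    expoM Z κ u = expoM Z κ v → monomial u (1 : K) - monomial v 1 ∈ cliqueI K A Z κ := by
  induction d with
  | zero =>
    intro u v hu huv
    rw [Finsupp.degree_eq_zero_iff] at hu
    subst hu
    have : v = 0 := by
      ext s
      by_contra hs
      have h0 : ∀ t, expoM Z κ v t = 0 := by
        intro t
        rw [← huv]
        simp [expoM]
      rcases s with i | i
      · refine (expoM_ne_zero_iff v (Sum.inl i)).2 ⟨_, hs, ?_⟩ (h0 _)
        simp [expo]
      · by_cases hi : i ∈ Z
        · refine (expoM_ne_zero_iff v (Sum.inl i)).2 ⟨_, hs, ?_⟩ (h0 _)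
          simp [expo, hi]
        · refine (expoM_ne_zero_iff v (Sum.inr (Sum.inl i))).2 ⟨_, hs, ?_⟩ (h0 _)
          simp [expo, hi]
    simp [this]
  | succ d ih =>
    have common : ∀ (u v : (V ⊕ V) →₀ ℕ) (s : V ⊕ V), u.degree = d + 1 →
        expoM Z κ u = expoM Z κ v → u s ≠ 0 → v s ≠ 0 →
        monomial u (1 : K) - monomial v 1 ∈ cliqueI K A Z κ := by
      intro u v s hu huv hus hvs
      obtain ⟨u, rfl⟩ := exists_add_single hus
      obtain ⟨v, rfl⟩ := exists_add_single hvs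
      rw [monomial_add_single, monomial_add_single, ← sub_mul]
      refine Ideal.mul_mem_right _ _ (ih u v ?_ ?_)
      · simpa [map_add, Finsupp.degree_single] using hu
      · rw [expoM_add, expoM_add] at huv
        exact add_right_cancel huv
    have hinl : ∀ (u v : (V ⊕ V) →₀ ℕ) (i : V), expoM Z κ u = expoM Z κ v → (u (Sum.inl i) ≠ 0 ∨
        i ∈ Z ∧ u (Sum.inr i) ≠ 0) → v (Sum.inl i) ≠ 0 ∨ i ∈ Z ∧ v (Sum.inr i) ≠ 0 := by
      intro u v i huv h
      have h1 : expoM Z κ u (Sum.inl i) ≠ 0 := by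
        rw [expoM_ne_zero_iff]
        rcases h with h | ⟨hi, h⟩
        · exact ⟨_, h, by simp [expo]⟩
        · exact ⟨_, h, by simp [expo, hi]⟩
      rw [huv, expoM_ne_zero_iff] at h1
      obtain ⟨s, hs, hst⟩ := h1
      rcases s with j | j
      · simp only [expo, Finsupp.single_apply] at hst
        by_cases hij : j = i
        · subst hij; exact Or.inl hs
        · simp [hij] at hst
      · by_cases hj : j ∈ Z
        · by_cases hij : j = i
          · subst hij; exact Or.inr ⟨hj, hs⟩
          · simp [expo, hj, hij] at hst
        · simp [expo, hj] at hst
    have hcol : ∀ (u v : (V ⊕ V) →₀ ℕ) (i : V), expoM Z κ u = expoM Z κ v → i ∈ Z →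
        u (Sum.inr i) ≠ 0 → ∃ k ∈ Z, κ k = κ i ∧ v (Sum.inr k) ≠ 0 := by
      intro u v i huv hi h
      have h1 : expoM Z κ u (Sum.inr (Sum.inr (κ i))) ≠ 0 :=
        (expoM_ne_zero_iff _ _).2 ⟨_, h, by simp [expo, hi]⟩
      rw [huv, expoM_ne_zero_iff] at h1
      obtain ⟨s, hs, hst⟩ := h1
      rcases s with j | j
      · simp [expo] at hst
      · by_cases hj : j ∈ Z
        · by_cases hij : κ j = κ i
          · exact ⟨j, hj, hij, hs⟩
          · simp [expo, hj, hij] at hst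
        · simp [expo, hj] at hst
    intro u v hu huv
    have hu0 : u ≠ 0 := by
      rintro rfl
      simp at hu
    obtain ⟨s, hs⟩ := Finsupp.ne_iff.1 hu0
    rw [Finsupp.zero_apply] at hs
    by_cases hvs : v s = 0
    swap
    · exact common u v s hu huv hs hvs
    rcases s with i | i
    · obtain ⟨hi, hvi⟩ := (hinl u v i huv (Or.inl hs)).resolve_left (not_not.2 hvs)
      obtain ⟨k, hk, hki, huk⟩ := hcol v u i huv.symm hi hvi
      obtain ⟨w, hw1, hw2, hw3, hw4⟩ := exists_swap (K := K) (A := A) hi hk hki hs huk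
      have := common w v _ (hw1.trans hu) (hw2.trans huv) hw3 hvi
      simpa using Ideal.add_mem _ hw4 this
    · by_cases hi : i ∈ Z
      · have hvi := (hinl u v i huv (Or.inr ⟨hi, hs⟩)).resolve_right (fun h => h.2 hvs)
        obtain ⟨k, hk, hki, hvk⟩ := hcol u v i huv hi hs
        obtain ⟨w, hw1, hw2, hw3, hw4⟩ := exists_swap (K := K) (A := A) hi hk hki hvi hvk
        have := common u w _ hu (huv.trans hw2.symm) hs hw3
        simpa using Ideal.sub_mem _ this hw4
      · exfalso
        have h1 : expoM Z κ u (Sum.inr (Sum.inl i)) ≠ 0 :=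
          (expoM_ne_zero_iff _ _).2 ⟨_, hs, by simp [expo, hi]⟩
        rw [huv, expoM_ne_zero_iff] at h1
        obtain ⟨s, hs', hst⟩ := h1
        rcases s with j | j
        · simp [expo] at hst
        · by_cases hj : j ∈ Z
          · simp [expo, hj] at hst
          · by_cases hij : j = i
            · subst hij; exact hs' hvs
            · simp [expo, hj, hij] at hst

lemma param_monomial (u : (V ⊕ V) →₀ ℕ) (c : K) :
    (∀ s ∈ A, u s = 0) → param K A Z κ (monomial u c) = monomial (expoM Z κ u) c := by
  intro h
  rw [param, aeval_monomial, Finsupp.prod_fintype _ _ (by simp), expoM,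
    ← mul_one c, ← C_mul_monomial, monomial_sum_one, mul_one]
  congr 1
  refine Finset.prod_congr rfl fun s _ => ?_
  by_cases hs : s ∈ A
  · simp [h s hs]
  · rw [if_neg hs, monomial_pow, one_pow]

lemma param_monomial_of_mem (u : (V ⊕ V) →₀ ℕ) (c : K) {s : V ⊕ V} (hs : s ∈ A) (hu : u s ≠ 0) :
    param K A Z κ (monomial u c) = 0 := by
  rw [param, aeval_monomial, Finsupp.prod_fintype _ _ (by simp),
    Finset.prod_eq_zero (Finset.mem_univ s), mul_zero]
  rw [if_pos hs, zero_pow hu]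

/-- `cliqueI` is a toric ideal together with some variables: it is the kernel of a monomial
parametrization, hence prime. -/
lemma ker_param (hA : ∀ i ∈ Z, Sum.inl i ∉ A ∧ Sum.inr i ∉ A) :
    RingHom.ker (param K A Z κ) = cliqueI K A Z κ := by
  apply le_antisymm
  · classical
    let good : ((V ⊕ V) →₀ ℕ) → Prop := fun u => ∀ s ∈ A, u s = 0
    let pre : ((V ⊕ (V ⊕ V)) →₀ ℕ) → MvPolynomial (V ⊕ V) K := fun t =>
      if h : ∃ u, good u ∧ expoM Z κ u = t then monomial h.choose 1 else 0
    let L : MvPolynomial (V ⊕ (V ⊕ V)) K →ₗ[K] (MvPolynomial (V ⊕ V) K ⧸ cliqueI K A Z κ) :=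
      (basisMonomials _ K).constr K fun t => Ideal.Quotient.mk _ (pre t)
    have hL : L ∘ₗ (param K A Z κ).toLinearMap = (Ideal.Quotient.mkₐ K (cliqueI K A Z κ)).toLinearMap := by
      refine (basisMonomials _ K).ext fun u => ?_
      rw [coe_basisMonomials]
      change L (param K A Z κ (monomial u 1)) = Ideal.Quotient.mk _ (monomial u 1)
      by_cases hu : good u
      · rw [param_monomial u 1 hu]
        have h1 : L (monomial (expoM Z κ u) 1) = Ideal.Quotient.mk _ (pre (expoM Z κ u)) := by
          have := (basisMonomials (V ⊕ (V ⊕ V)) K).constr_basis K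
            (fun t => Ideal.Quotient.mk (cliqueI K A Z κ) (pre t)) (expoM Z κ u)
          rwa [coe_basisMonomials] at this
        have hex : ∃ u', good u' ∧ expoM Z κ u' = expoM Z κ u := ⟨u, hu, rfl⟩
        rw [h1, Ideal.Quotient.eq]
        simp only [pre]
        rw [dif_pos hex]
        exact monomial_sub_mem _ _ _ rfl hex.choose_spec.2
      · simp only [good] at hu
        push Not at hu
        obtain ⟨s, hs, hus⟩ := hu
        rw [param_monomial_of_mem u 1 hs hus, map_zero, eq_comm, Ideal.Quotient.eq_zero_iff_mem]
        obtain ⟨u, rfl⟩ := exists_add_single hus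
        rw [monomial_add_single, pow_one]
        exact Ideal.mul_mem_left _ _ (X_mem_cliqueI hs)
    intro p hp
    rw [RingHom.mem_ker] at hp
    have := LinearMap.congr_fun hL p
    change L (param K A Z κ p) = Ideal.Quotient.mk _ p at this
    rw [show param K A Z κ p = 0 from hp, map_zero, eq_comm, Ideal.Quotient.eq_zero_iff_mem] at this
    exact this
  · refine cliqueI_le (fun s hs => ?_) (fun i hi j hj hij => ?_)
    · rw [RingHom.mem_ker, param_X, if_pos hs]
    · rw [RingHom.mem_ker]
      simp only [minor, xv, yv, map_sub, map_mul, param_X, (hA i hi).1, (hA i hi).2, (hA j hj).1,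
        (hA j hj).2, if_false, expo, hi, hj, if_true, monomial_mul, hij]
      rw [sub_eq_zero, add_left_comm]

lemma cliqueI_isPrime (hA : ∀ i ∈ Z, Sum.inl i ∉ A ∧ Sum.inr i ∉ A) : (cliqueI K A Z κ).IsPrime := by
  rw [← ker_param hA]
  exact RingHom.ker_isPrime _

end Clique

section CliqueDepth

variable {K : Type} [Field K] {V : Type} {κ : V → V}

lemma eval_minor (c : V ⊕ V → K) (i j : V) :
    eval c (minor K i j) = c (Sum.inl i) * c (Sum.inr j) - c (Sum.inl j) * c (Sum.inr i) := by
  simp [minor, xv, yv]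

lemma cliqueI_empty_insert [DecidableEq V] (A : Finset (V ⊕ V)) (s : V ⊕ V) :
    cliqueI K (insert s A) ∅ κ = cliqueI K A ∅ κ ⊔ Ideal.span {X s} := by
  apply le_antisymm
  · refine cliqueI_le (fun t ht => ?_) (fun i hi => by simp at hi)
    rcases Finset.mem_insert.1 ht with rfl | ht
    · exact Ideal.mem_sup_right (Ideal.mem_span_singleton_self _)
    · exact Ideal.mem_sup_left (X_mem_cliqueI ht)
  · refine sup_le (cliqueI_le (fun t ht => X_mem_cliqueI (Finset.mem_insert_of_mem ht))
      (fun i hi => by simp at hi)) ?_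
    rw [Ideal.span_singleton_le_iff_mem]
    exact X_mem_cliqueI (Finset.mem_insert_self _ _)

lemma X_not_mem_cliqueI [DecidableEq V] {A : Finset (V ⊕ V)} {Z : Finset V}
    (hA : ∀ i ∈ Z, Sum.inl i ∉ A ∧ Sum.inr i ∉ A) {s : V ⊕ V} (hs : s ∉ A) :
    (X s : MvPolynomial (V ⊕ V) K) ∉ cliqueI K A Z κ := by
  intro h
  have : cliqueI K A Z κ ≤ RingHom.ker (eval (fun t => if t ∈ A then (0 : K) else 1)) := by
    refine cliqueI_le (fun t ht => ?_) (fun i hi j hj _ => ?_)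
    · simp [RingHom.mem_ker, ht]
    · simp [RingHom.mem_ker, eval_minor, hA i hi, hA j hj]
  have h1 := this h
  simp [RingHom.mem_ker, hs] at h1

variable [DecidableEq V]

lemma minor_not_mem_cliqueI {A : Finset (V ⊕ V)} {Z : Finset V}
    (hA : ∀ i ∈ Z, Sum.inl i ∉ A ∧ Sum.inr i ∉ A) {i j : V} (hi : i ∈ Z) (hj : j ∉ Z)
    (hjA : Sum.inl j ∉ A) : minor K i j ∉ cliqueI K A Z κ := by
  intro h
  have hij : ∀ i ∈ Z, i ≠ j := fun i hi h => hj (h ▸ hi)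
  have : cliqueI K A Z κ ≤
      RingHom.ker (eval (fun t => if t ∈ A ∨ t = Sum.inr j then (0 : K) else 1)) := by
    refine cliqueI_le (fun t ht => ?_) (fun i hi k hk _ => ?_)
    · simp [RingHom.mem_ker, ht]
    · simp [RingHom.mem_ker, eval_minor, hA i hi, hA k hk, hij i hi, hij k hk]
  have h1 := this h
  simp [RingHom.mem_ker, eval_minor, hA i hi, hjA, hij i hi] at h1

lemma cliqueI_insert_of_forall_ne {A : Finset (V ⊕ V)} {Z : Finset V} {j : V}
    (hj : ∀ i ∈ Z, κ i ≠ κ j) : cliqueI K A (insert j Z) κ = cliqueI K A Z κ := by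
  apply le_antisymm
  · refine cliqueI_le (fun s hs => X_mem_cliqueI hs) (fun i hi k hk h => ?_)
    rcases Finset.mem_insert.1 hi with rfl | hi' <;> rcases Finset.mem_insert.1 hk with rfl | hk'
    · rw [minor_self]; exact Ideal.zero_mem _
    · exact absurd h.symm (hj k hk')
    · exact absurd h (hj i hi')
    · exact minor_mem_cliqueI hi' hk' h
  · exact cliqueI_le (fun s hs => X_mem_cliqueI hs) (fun i hi k hk h =>
      minor_mem_cliqueI (Finset.mem_insert_of_mem hi) (Finset.mem_insert_of_mem hk) h)

variable [Fintype V]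

lemma cliqueI_empty_depth (k : ℕ) : ∀ A : Finset (V ⊕ V), k + A.card ≤ 2 * Fintype.card V →
    HasDepth (mIdeal K (V ⊕ V)) k (MvPolynomial (V ⊕ V) K ⧸ cliqueI K A ∅ κ) := by
  induction k with
  | zero => intro A _ i hi; omega
  | succ k ih =>
    intro A hA
    obtain ⟨s, hs⟩ : ∃ s, s ∉ A := by
      by_contra h
      push Not at h
      have : A = Finset.univ := Finset.eq_univ_iff_forall.2 h
      subst this
      rw [Finset.card_univ, Fintype.card_sum] at hA
      omega
    have hpr : (cliqueI K A ∅ κ).IsPrime := cliqueI_isPrime (by simp)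
    refine HasDepth.quot_of_regular (f := X s) (X_mem_mIdeal s) (fun g hg => ?_) ?_
    · exact (hpr.mem_or_mem hg).resolve_left (X_not_mem_cliqueI (by simp) hs)
    · rw [← cliqueI_empty_insert]
      exact ih _ (by rw [Finset.card_insert_of_notMem hs]; omega)

lemma le_of_add_one_le {x : WithBot ℕ∞} {d : ℕ} (h : x + 1 ≤ ((d + 1 : ℕ) : WithBot ℕ∞)) :
    x ≤ d := by
  induction x using WithBot.recBotCoe with
  | bot => exact bot_le
  | coe x =>
    have h' : x + 1 ≤ ((d + 1 : ℕ) : ℕ∞) := by exact_mod_cast h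
    have : x ≤ d := by
      push_cast at h'
      exact (ENat.add_le_add_iff_right (by simp)).1 h'
    exact_mod_cast this

lemma cliqueI_empty_dim (A : Finset (V ⊕ V)) : ∀ d : ℕ, 2 * Fintype.card V ≤ d + A.card →
    ringKrullDim (MvPolynomial (V ⊕ V) K ⧸ cliqueI K A ∅ κ) ≤ d := by
  induction A using Finset.induction_on with
  | empty =>
    intro d hd
    have h1 : ringKrullDim (MvPolynomial (V ⊕ V) K) = (2 * Fintype.card V : ℕ) := by
      rw [MvPolynomial.ringKrullDim_of_isNoetherianRing, ringKrullDim_eq_zero_of_field]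
      simp [two_mul]
    refine (ringKrullDim_quotient_le _).trans (h1.le.trans ?_)
    simp only [Finset.card_empty, add_zero] at hd
    exact_mod_cast hd
  | insert s A hs ih =>
    intro d hd
    rw [Finset.card_insert_of_notMem hs] at hd
    have hpr : (cliqueI K A ∅ κ).IsPrime := cliqueI_isPrime (by simp)
    apply le_of_add_one_le
    refine (dim_succ_le_of_lt (P := cliqueI K A ∅ κ) ?_).trans (ih (d + 1) (by omega))
    rw [cliqueI_empty_insert]
    refine lt_of_le_of_ne le_sup_left fun h => X_not_mem_cliqueI (K := K) (κ := κ) (Z := ∅) (by simp) hs ?_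
    rw [h]
    exact Ideal.mem_sup_right (Ideal.mem_span_singleton_self _)

/-- Induction on `Z`: when a vertex `j` joins a nonempty colour class `C`, with `i₀ ∈ C`, the
ideal of the larger configuration is linked, modulo the smaller one, to the ideal in which the
class `C` is replaced by the variables `x_i`, `i ∈ C`. -/
lemma cliqueI_depth (Z : Finset V) : ∀ (A : Finset (V ⊕ V)) (k : ℕ),
    (∀ i ∈ Z, Sum.inl i ∉ A ∧ Sum.inr i ∉ A) →
    k + A.card + Z.card ≤ 2 * Fintype.card V + (Z.image κ).card →
    HasDepth (mIdeal K (V ⊕ V)) k (MvPolynomial (V ⊕ V) K ⧸ cliqueI K A Z κ) := by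
  induction Z using Finset.strongInduction with
  | H Z ih =>
  intro A k hA hk
  rcases Z.eq_empty_or_nonempty with rfl | ⟨j, hj⟩
  · exact cliqueI_empty_depth k A (by simpa using hk)
  obtain ⟨Z, hjZ, rfl⟩ : ∃ Z', j ∉ Z' ∧ Z = insert j Z' :=
    ⟨Z.erase j, Finset.notMem_erase _ _, (Finset.insert_erase hj).symm⟩
  have hss : Z ⊂ insert j Z := Finset.ssubset_insert hjZ
  rw [Finset.card_insert_of_notMem hjZ, Finset.image_insert] at hk
  have hAZ : ∀ i ∈ Z, Sum.inl i ∉ A ∧ Sum.inr i ∉ A :=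
    fun i hi => hA i (Finset.mem_insert_of_mem hi)
  have hAj := hA j (Finset.mem_insert_self _ _)
  by_cases hC : ∀ i ∈ Z, κ i ≠ κ j
  · rw [cliqueI_insert_of_forall_ne hC]
    refine ih Z hss A k hAZ ?_
    rw [Finset.card_insert_of_notMem] at hk
    · omega
    · intro h
      obtain ⟨i, hi, hij⟩ := Finset.mem_image.1 h
      exact hC i hi hij
  push Not at hC
  obtain ⟨i₀, hi₀, hκ⟩ := hC
  rw [Finset.insert_eq_of_mem (hκ ▸ Finset.mem_image_of_mem κ hi₀)] at hk
  set C := Z.filter fun i => κ i = κ j with hCdef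
  have hCZ : C ⊆ Z := Finset.filter_subset _ _
  have hmC : ∀ i, i ∈ C ↔ i ∈ Z ∧ κ i = κ j := fun i => by simp [hCdef]
  have hpr : (cliqueI K A Z κ).IsPrime := cliqueI_isPrime hAZ
  have hI : HasDepth (mIdeal K (V ⊕ V)) (k + 1) (MvPolynomial (V ⊕ V) K ⧸ cliqueI K A Z κ) :=
    ih Z hss A (k + 1) hAZ (by omega)
  have hM : HasDepth (mIdeal K (V ⊕ V)) k
      (MvPolynomial (V ⊕ V) K ⧸ cliqueI K (A ∪ C.image Sum.inl) (Z \ C) κ) := by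
    refine ih (Z \ C) (lt_of_le_of_lt Finset.sdiff_subset hss) _ k ?_ ?_
    · intro i hi
      rw [Finset.mem_sdiff] at hi
      simp [hAZ i hi.1, hi.2]
    · have h1 : (A ∪ C.image Sum.inl).card ≤ A.card + C.card :=
        (Finset.card_union_le _ _).trans (by gcongr; exact Finset.card_image_le)
      have h2 : (Z \ C).card + C.card = Z.card := Finset.card_sdiff_add_card_eq_card hCZ
      have h3 : (Z.image κ).card ≤ ((Z \ C).image κ).card + 1 := by
        refine (Finset.card_le_card (t := insert (κ j) ((Z \ C).image κ)) ?_).trans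
          (Finset.card_insert_le _ _)
        intro c hc
        obtain ⟨i, hi, rfl⟩ := Finset.mem_image.1 hc
        by_cases h : κ i = κ j
        · rw [h]; exact Finset.mem_insert_self _ _
        · refine Finset.mem_insert_of_mem (Finset.mem_image_of_mem _ ?_)
          simp [hi, h, hmC]
      omega
  have hle : cliqueI K A Z κ ≤ cliqueI K A (insert j Z) κ :=
    cliqueI_le (fun s hs => X_mem_cliqueI hs) (fun i hi k hk h =>
      minor_mem_cliqueI (Finset.mem_insert_of_mem hi) (Finset.mem_insert_of_mem hk) h)
  have hxM : ∀ i ∈ C, xv K i ∈ cliqueI K (A ∪ C.image Sum.inl) (Z \ C) κ := fun i hi =>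
    X_mem_cliqueI (Finset.mem_union_right _ (Finset.mem_image_of_mem _ hi))
  have hleM : cliqueI K A Z κ ≤ cliqueI K (A ∪ C.image Sum.inl) (Z \ C) κ := by
    refine cliqueI_le (fun s hs => X_mem_cliqueI (Finset.mem_union_left _ hs))
      (fun i hi l hl h => ?_)
    by_cases hiC : i ∈ C
    · have hlC : l ∈ C := (hmC l).2 ⟨hl, h ▸ ((hmC i).1 hiC).2⟩
      exact Ideal.sub_mem _ (Ideal.mul_mem_right _ _ (hxM i hiC))
        (Ideal.mul_mem_right _ _ (hxM l hlC))
    · have hlC : l ∉ C := fun hlC => hiC ((hmC i).2 ⟨hi, h.trans ((hmC l).1 hlC).2⟩)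
      exact minor_mem_cliqueI (Finset.mem_sdiff.2 ⟨hi, hiC⟩) (Finset.mem_sdiff.2 ⟨hl, hlC⟩) h
  have hkey : ∀ i ∈ C, xv K i₀ * minor K i j - minor K i₀ j * xv K i ∈ cliqueI K A Z κ := by
    intro i hi
    have h1 : minor K i₀ i ∈ cliqueI K A Z κ :=
      minor_mem_cliqueI hi₀ (hCZ hi) (hκ.trans ((hmC i).1 hi).2.symm)
    have h2 : xv K i₀ * minor K i j - minor K i₀ j * xv K i = -(xv K j * minor K i₀ i) := by
      simp only [minor]; ring
    rw [h2]
    exact neg_mem (Ideal.mul_mem_left _ _ h1)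
  refine HasDepth.linkage (a := xv K i₀) (b := minor K i₀ j) hle hleM (fun g hg => ?_)
    (fun g hg => ?_) ?_ ?_ hI hM
  · exact (hpr.mem_or_mem hg).resolve_left (X_not_mem_cliqueI hAZ (hAZ i₀ hi₀).1)
  · exact (hpr.mem_or_mem hg).resolve_left (minor_not_mem_cliqueI hAZ hi₀ hjZ hAj.1)
  · intro g hg
    have htriv : ∀ g ∈ cliqueI K A Z κ, ∃ c ∈ cliqueI K (A ∪ C.image Sum.inl) (Z \ C) κ,
        xv K i₀ * g - minor K i₀ j * c ∈ cliqueI K A Z κ := fun g hg =>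
      ⟨0, Ideal.zero_mem _, by simpa using Ideal.mul_mem_left _ _ hg⟩
    refine Submodule.span_induction ?_ (htriv 0 (Ideal.zero_mem _)) ?_ ?_ hg
    · rintro _ (⟨s, hs, rfl⟩ | ⟨i, hi, l, hl, h, rfl⟩)
      · exact htriv _ (X_mem_cliqueI hs)
      rcases Finset.mem_insert.1 hi with rfl | hi' <;> rcases Finset.mem_insert.1 hl with rfl | hl'
      · rw [minor_self]; exact htriv 0 (Ideal.zero_mem _)
      · have hlC : l ∈ C := (hmC l).2 ⟨hl', h.symm⟩
        refine ⟨-xv K l, neg_mem (hxM l hlC), ?_⟩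
        rw [minor_swap]
        convert neg_mem (hkey l hlC) using 1
        ring
      · have hiC : i ∈ C := (hmC i).2 ⟨hi', h⟩
        exact ⟨xv K i, hxM i hiC, hkey i hiC⟩
      · exact htriv _ (minor_mem_cliqueI hi' hl' h)
    · rintro g g' _ _ ⟨c, hc, h⟩ ⟨c', hc', h'⟩
      refine ⟨c + c', Ideal.add_mem _ hc hc', ?_⟩
      convert Ideal.add_mem _ h h' using 1
      ring
    · rintro r g _ ⟨c, hc, h⟩
      refine ⟨r * c, Ideal.mul_mem_left _ _ hc, ?_⟩
      convert Ideal.mul_mem_left _ r h using 1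
      rw [smul_eq_mul]
      ring
  · intro c hc
    have htriv : ∀ c ∈ cliqueI K A Z κ, ∃ g ∈ cliqueI K A (insert j Z) κ,
        xv K i₀ * g - minor K i₀ j * c ∈ cliqueI K A Z κ := fun c hc =>
      ⟨0, Ideal.zero_mem _, by simpa using Ideal.mul_mem_left _ _ hc⟩
    refine Submodule.span_induction ?_ (htriv 0 (Ideal.zero_mem _)) ?_ ?_ hc
    · rintro _ (⟨s, hs, rfl⟩ | ⟨i, hi, l, hl, h, rfl⟩)
      · rcases Finset.mem_union.1 hs with hs | hs
        · exact htriv _ (X_mem_cliqueI hs)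
        · obtain ⟨i, hi, rfl⟩ := Finset.mem_image.1 hs
          exact ⟨minor K i j, minor_mem_cliqueI (Finset.mem_insert_of_mem (hCZ hi))
            (Finset.mem_insert_self _ _) ((hmC i).1 hi).2, hkey i hi⟩
      · exact htriv _ (minor_mem_cliqueI (Finset.mem_sdiff.1 hi).1 (Finset.mem_sdiff.1 hl).1 h)
    · rintro g g' _ _ ⟨c, hc, h⟩ ⟨c', hc', h'⟩
      refine ⟨c + c', Ideal.add_mem _ hc hc', ?_⟩
      convert Ideal.add_mem _ h h' using 1
      ring
    · rintro r g _ ⟨c, hc, h⟩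
      refine ⟨r * c, Ideal.mul_mem_left _ _ hc, ?_⟩
      convert Ideal.mul_mem_left _ r h using 1
      rw [smul_eq_mul]
      ring

lemma cliqueI_dim (Z : Finset V) : ∀ (A : Finset (V ⊕ V)) (d : ℕ),
    (∀ i ∈ Z, Sum.inl i ∉ A ∧ Sum.inr i ∉ A) →
    2 * Fintype.card V + (Z.image κ).card ≤ d + A.card + Z.card →
    ringKrullDim (MvPolynomial (V ⊕ V) K ⧸ cliqueI K A Z κ) ≤ d := by
  induction Z using Finset.induction_on with
  | empty => exact fun A d _ hd => cliqueI_empty_dim A d (by simpa using hd)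
  | insert j Z hjZ ih =>
  intro A d hA hd
  rw [Finset.card_insert_of_notMem hjZ, Finset.image_insert] at hd
  have hAZ : ∀ i ∈ Z, Sum.inl i ∉ A ∧ Sum.inr i ∉ A :=
    fun i hi => hA i (Finset.mem_insert_of_mem hi)
  have hAj := hA j (Finset.mem_insert_self _ _)
  by_cases hC : ∀ i ∈ Z, κ i ≠ κ j
  · rw [cliqueI_insert_of_forall_ne hC]
    refine ih A d hAZ ?_
    rw [Finset.card_insert_of_notMem] at hd
    · omega
    · intro h
      obtain ⟨i, hi, hij⟩ := Finset.mem_image.1 h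
      exact hC i hi hij
  push Not at hC
  obtain ⟨i₀, hi₀, hκ⟩ := hC
  rw [Finset.insert_eq_of_mem (hκ ▸ Finset.mem_image_of_mem κ hi₀)] at hd
  have hpr : (cliqueI K A Z κ).IsPrime := cliqueI_isPrime hAZ
  apply le_of_add_one_le
  refine (dim_succ_le_of_lt (P := cliqueI K A Z κ) ?_).trans (ih A (d + 1) hAZ (by omega))
  refine lt_of_le_of_ne (cliqueI_le (fun s hs => X_mem_cliqueI hs) (fun i hi k hk h =>
      minor_mem_cliqueI (Finset.mem_insert_of_mem hi) (Finset.mem_insert_of_mem hk) h)) fun h => ?_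
  refine minor_not_mem_cliqueI (K := K) (κ := κ) hAZ hi₀ hjZ hAj.1 ?_
  rw [h]
  exact minor_mem_cliqueI (Finset.mem_insert_of_mem hi₀) (Finset.mem_insert_self _ _) hκ

end CliqueDepth

/-! ### Elimination of a vertex -/

section Elim

variable (K : Type) [Field K] {V : Type}

/-- The ideal generated by the variables `x_i, y_i` with `i ∈ T` and the minors
`x_i y_j - x_j y_i` with `r i j`. -/
def relI (T : Set V) (r : V → V → Prop) : Ideal (MvPolynomial (V ⊕ V) K) :=
  Ideal.span ({f | ∃ i ∈ T, f = xv K i ∨ f = yv K i} ∪ {f | ∃ i j, r i j ∧ f = minor K i j})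

variable {K} {T : Set V} {r : V → V → Prop}

lemma xv_mem_relI {i : V} (hi : i ∈ T) : xv K i ∈ relI K T r :=
  Ideal.subset_span (Or.inl ⟨i, hi, Or.inl rfl⟩)

lemma yv_mem_relI {i : V} (hi : i ∈ T) : yv K i ∈ relI K T r :=
  Ideal.subset_span (Or.inl ⟨i, hi, Or.inr rfl⟩)

lemma minor_mem_relI {i j : V} (h : r i j) : minor K i j ∈ relI K T r :=
  Ideal.subset_span (Or.inr ⟨i, j, h, rfl⟩)

lemma minor_mem_relI_left {i : V} (j : V) (hi : i ∈ T) : minor K i j ∈ relI K T r :=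
  Ideal.sub_mem _ (Ideal.mul_mem_right _ _ (xv_mem_relI hi))
    (Ideal.mul_mem_left _ _ (yv_mem_relI hi))

lemma minor_mem_relI_right (i : V) {j : V} (hj : j ∈ T) : minor K i j ∈ relI K T r :=
  Ideal.sub_mem _ (Ideal.mul_mem_left _ _ (yv_mem_relI hj))
    (Ideal.mul_mem_right _ _ (xv_mem_relI hj))

lemma relI_le {I : Ideal (MvPolynomial (V ⊕ V) K)} (h₁ : ∀ i ∈ T, xv K i ∈ I)
    (h₂ : ∀ i ∈ T, yv K i ∈ I) (h₃ : ∀ i j, r i j → minor K i j ∈ I) : relI K T r ≤ I := by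
  refine Ideal.span_le.2 ?_
  rintro _ (⟨i, hi, rfl | rfl⟩ | ⟨i, j, h, rfl⟩)
  exacts [h₁ i hi, h₂ i hi, h₃ i j h]

lemma relI_mono {T' : Set V} {r' : V → V → Prop} (hT : T ⊆ T') (hr : ∀ i j, r i j → r' i j) :
    relI K T r ≤ relI K T' r' :=
  relI_le (fun _ hi => xv_mem_relI (hT hi)) (fun _ hi => yv_mem_relI (hT hi))
    (fun i j h => minor_mem_relI (hr i j h))

lemma relI_sup {T' : Set V} {r' : V → V → Prop} :
    relI K T r ⊔ relI K T' r' = relI K (T ∪ T') (fun i j => r i j ∨ r' i j) := by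
  apply le_antisymm
  · exact sup_le (relI_mono Set.subset_union_left fun i j => Or.inl)
      (relI_mono Set.subset_union_right fun i j => Or.inr)
  · refine relI_le ?_ ?_ ?_
    · rintro i (hi | hi)
      exacts [Ideal.mem_sup_left (xv_mem_relI hi), Ideal.mem_sup_right (xv_mem_relI hi)]
    · rintro i (hi | hi)
      exacts [Ideal.mem_sup_left (yv_mem_relI hi), Ideal.mem_sup_right (yv_mem_relI hi)]
    · rintro i j (h | h)
      exacts [Ideal.mem_sup_left (minor_mem_relI h), Ideal.mem_sup_right (minor_mem_relI h)]

lemma relI_le_mIdeal : relI K T r ≤ mIdeal K (V ⊕ V) :=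
  relI_le (fun _ _ => X_mem_mIdeal _) (fun _ _ => X_mem_mIdeal _) fun _ _ _ =>
    Ideal.sub_mem _ (Ideal.mul_mem_left _ _ (X_mem_mIdeal _))
      (Ideal.mul_mem_left _ _ (X_mem_mIdeal _))

/-- The relation obtained from `r` by making the neighbours of `v` pairwise related. -/
def cliqueAt (r : V → V → Prop) (v : V) (i j : V) : Prop := r i j ∨ (r i v ∧ r v j)

lemma relI_elim_sup (v : V) : relI K T (cliqueAt r v) ⊔ relI K (insert v T) r =
    relI K (insert v T) (cliqueAt r v) := by
  rw [relI_sup, Set.union_eq_self_of_subset_left (Set.subset_insert _ _)]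
  congr 1
  funext i j
  simp only [cliqueAt, eq_iff_iff]
  tauto

variable [DecidableEq V]

/-- The substitution `x_v = y_v = 0`. -/
def kill (K : Type) [Field K] (v : V) : MvPolynomial (V ⊕ V) K →ₐ[K] MvPolynomial (V ⊕ V) K :=
  aeval fun s => if s = Sum.inl v ∨ s = Sum.inr v then 0 else X s

lemma kill_xv (v i : V) : kill K v (xv K i) = if i = v then 0 else xv K i := by
  simp [kill, xv]

lemma kill_yv (v i : V) : kill K v (yv K i) = if i = v then 0 else yv K i := by
  simp [kill, yv]

lemma kill_minor_of_ne {v i j : V} (hi : i ≠ v) (hj : j ≠ v) :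
    kill K v (minor K i j) = minor K i j := by
  simp [minor, kill_xv, kill_yv, hi, hj]

lemma kill_minor_of_eq {v i j : V} (h : i = v ∨ j = v) : kill K v (minor K i j) = 0 := by
  rcases h with rfl | rfl <;> simp [minor, kill_xv, kill_yv]

lemma sub_kill_mul_mem {B : Ideal (MvPolynomial (V ⊕ V) K)} {v : V} {h : MvPolynomial (V ⊕ V) K}
    (hx : xv K v * h ∈ B) (hy : yv K v * h ∈ B) (g : MvPolynomial (V ⊕ V) K) :
    (g - kill K v g) * h ∈ B := by
  induction g using MvPolynomial.induction_on with
  | C a => simp [kill]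
  | add p q hp hq =>
    rw [map_add]
    convert Ideal.add_mem _ hp hq using 1
    ring
  | mul_X p s hp =>
    have h1 : (X s - kill K v (X s)) * h ∈ B := by
      by_cases hs : s = Sum.inl v ∨ s = Sum.inr v
      · have : kill K v (X s) = 0 := by simp [kill, hs]
        rw [this, sub_zero]
        rcases hs with rfl | rfl
        exacts [hx, hy]
      · have : kill K v (X s) = X s := by simp only [kill, aeval_X, hs, if_false]
        rw [this, sub_self, zero_mul]
        exact Ideal.zero_mem _
    rw [map_mul]
    convert Ideal.add_mem _ (Ideal.mul_mem_left _ (kill K v (X s)) hp)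
      (Ideal.mul_mem_left _ p h1) using 1
    ring

lemma relI_cliqueAt_kill {v : V} (hr : ∀ i j, r i j → r j i) {g : MvPolynomial (V ⊕ V) K}
    (hg : g ∈ relI K T (cliqueAt r v)) :
    g - kill K v g ∈ relI K T r ∧ xv K v * kill K v g ∈ relI K T r ∧
      yv K v * kill K v g ∈ relI K T r := by
  have htriv : ∀ g ∈ relI K T r, (kill K v g = g ∨ kill K v g = 0) →
      g - kill K v g ∈ relI K T r ∧ xv K v * kill K v g ∈ relI K T r ∧
      yv K v * kill K v g ∈ relI K T r := by
    rintro g hg (h | h)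
    · rw [h, sub_self]
      exact ⟨Ideal.zero_mem _, Ideal.mul_mem_left _ _ hg, Ideal.mul_mem_left _ _ hg⟩
    · rw [h, sub_zero, mul_zero, mul_zero]
      exact ⟨hg, Ideal.zero_mem _, Ideal.zero_mem _⟩
  have hm : ∀ i j, kill K v (minor K i j) = minor K i j ∨ kill K v (minor K i j) = 0 := by
    intro i j
    by_cases h : i = v ∨ j = v
    · exact Or.inr (kill_minor_of_eq h)
    · push Not at h
      exact Or.inl (kill_minor_of_ne h.1 h.2)
  refine Submodule.span_induction ?_ (htriv 0 (Ideal.zero_mem _) (by simp)) ?_ ?_ hg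
  · rintro _ (⟨i, hi, rfl | rfl⟩ | ⟨i, j, h | ⟨h, h'⟩, rfl⟩)
    · refine htriv _ (xv_mem_relI hi) ?_
      rw [kill_xv]; split_ifs <;> simp
    · refine htriv _ (yv_mem_relI hi) ?_
      rw [kill_yv]; split_ifs <;> simp
    · exact htriv _ (minor_mem_relI h) (hm i j)
    · by_cases hi : i = v
      · subst hi
        exact htriv _ (minor_mem_relI h') (hm _ _)
      by_cases hj : j = v
      · subst hj
        exact htriv _ (minor_mem_relI h) (hm _ _)
      rw [kill_minor_of_ne hi hj, sub_self]
      have h1 : minor K v i ∈ relI K T r := minor_mem_relI (hr _ _ h)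
      have h2 : minor K v j ∈ relI K T r := minor_mem_relI h'
      refine ⟨Ideal.zero_mem _, ?_, ?_⟩
      · convert Ideal.sub_mem _ (Ideal.mul_mem_left _ (xv K i) h2)
          (Ideal.mul_mem_left _ (xv K j) h1) using 1
        simp only [minor]; ring
      · convert Ideal.sub_mem _ (Ideal.mul_mem_left _ (yv K i) h2)
          (Ideal.mul_mem_left _ (yv K j) h1) using 1
        simp only [minor]; ring
  · rintro a b _ _ ⟨h1, h2, h3⟩ ⟨h1', h2', h3'⟩
    rw [map_add]
    refine ⟨?_, ?_, ?_⟩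
    · convert Ideal.add_mem _ h1 h1' using 1; ring
    · convert Ideal.add_mem _ h2 h2' using 1; ring
    · convert Ideal.add_mem _ h3 h3' using 1; ring
  · rintro s a _ ⟨h1, h2, h3⟩
    rw [smul_eq_mul, map_mul]
    refine ⟨?_, ?_, ?_⟩
    · convert Ideal.add_mem _ (Ideal.mul_mem_left _ s h1) (sub_kill_mul_mem h2 h3 s) using 1
      ring
    · convert Ideal.mul_mem_left _ (kill K v s) h2 using 1; ring
    · convert Ideal.mul_mem_left _ (kill K v s) h3 using 1; ring

/-- Multiplication by `x_v` undoes the completion of the neighbourhood of `v` to a clique, since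
`x_v f_{ij}` is a combination of `f_{iv}` and `f_{vj}`. -/
lemma xv_mul_mem_of_cliqueAt {v : V} (hr : ∀ i j, r i j → r j i) {g : MvPolynomial (V ⊕ V) K}
    (hg : g ∈ relI K T (cliqueAt r v)) : xv K v * g ∈ relI K T r := by
  obtain ⟨h1, h2, -⟩ := relI_cliqueAt_kill hr hg
  convert Ideal.add_mem _ (Ideal.mul_mem_left _ (xv K v) h1) h2 using 1
  ring

lemma kill_mem_of_mem_insert {v : V} {g : MvPolynomial (V ⊕ V) K}
    (hg : g ∈ relI K (insert v T) r) : kill K v g ∈ relI K T r := by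
  have : relI K (insert v T) r ≤ (relI K T r).comap (kill K v) := by
    refine relI_le ?_ ?_ ?_
    · intro i hi
      rw [Ideal.mem_comap, kill_xv]
      split_ifs with h
      · exact Ideal.zero_mem _
      · exact xv_mem_relI (hi.resolve_left h)
    · intro i hi
      rw [Ideal.mem_comap, kill_yv]
      split_ifs with h
      · exact Ideal.zero_mem _
      · exact yv_mem_relI (hi.resolve_left h)
    · intro i j h
      rw [Ideal.mem_comap]
      by_cases h' : i = v ∨ j = v
      · rw [kill_minor_of_eq h']
        exact Ideal.zero_mem _
      · push Not at h'
        rw [kill_minor_of_ne h'.1 h'.2]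
        exact minor_mem_relI h
  exact this hg

/-- The basic decomposition: a polynomial `g` in both ideals on the right is the sum of
`g - g|_{x_v = y_v = 0}` and `g|_{x_v = y_v = 0}`, both of which lie in the ideal on the left. -/
lemma relI_elim (v : V) (hr : ∀ i j, r i j → r j i) :
    relI K T r = relI K T (cliqueAt r v) ⊓ relI K (insert v T) r := by
  apply le_antisymm
  · exact le_inf (relI_mono le_rfl fun i j => Or.inl)
      (relI_mono (Set.subset_insert _ _) fun i j h => h)
  · rintro g ⟨h1, h2⟩
    convert Ideal.add_mem _ (relI_cliqueAt_kill hr h1).1 (kill_mem_of_mem_insert h2) using 1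
    ring

end Elim

/-! ### Intermediate graphs -/

section Conn

variable {V : Type}

/-- `Conn r W i j`: there is an `r`-path from `i` to `j` whose interior vertices lie in `W`. -/
inductive Conn (r : V → V → Prop) (W : Finset V) : V → V → Prop
  | base {i j : V} (h : r i j) : Conn r W i j
  | step {i j w : V} (hw : w ∈ W) (h₁ : Conn r W i w) (h₂ : Conn r W w j) : Conn r W i j

variable {r : V → V → Prop} {W : Finset V}

lemma Conn.symm (hr : ∀ i j, r i j → r j i) {i j : V} (h : Conn r W i j) : Conn r W j i := by
  induction h with
  | base h => exact .base (hr _ _ h)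
  | step hw _ _ ih₁ ih₂ => exact .step hw ih₂ ih₁

lemma Conn.mono {W' : Finset V} (hW : W ⊆ W') {i j : V} (h : Conn r W i j) : Conn r W' i j := by
  induction h with
  | base h => exact .base h
  | step hw _ _ ih₁ ih₂ => exact .step (hW hw) ih₁ ih₂

lemma conn_empty : Conn r ∅ = r := by
  funext i j
  refine propext ⟨fun h => ?_, .base⟩
  cases h with
  | base h => exact h
  | step hw => simp at hw

/-- The last edge of a path. -/
lemma Conn.last {T : Finset V} (hTW : Disjoint T W) {i v : V} (hi : i ∉ T) (h : Conn r W i v) :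
    ∃ u, u ∉ T ∧ r u v ∧ (u = i ∨ u ∈ W ∧ Conn r W i u) := by
  induction h with
  | base h => exact ⟨_, hi, h, Or.inl rfl⟩
  | @step i v w hw h₁ _ _ ih₂ =>
    obtain ⟨u, hu, huv, h⟩ := ih₂ (Finset.disjoint_right.1 hTW hw)
    refine ⟨u, hu, huv, Or.inr ?_⟩
    rcases h with rfl | ⟨huW, h⟩
    · exact ⟨hw, h₁⟩
    · exact ⟨huW, .step hw h₁ h⟩

variable [DecidableEq V]

lemma conn_insert (v : V) : Conn r (insert v W) = cliqueAt (Conn r W) v := by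
  funext i j
  refine propext ⟨fun h => ?_, ?_⟩
  · induction h with
    | base h => exact Or.inl (.base h)
    | @step i j w hw _ _ ih₁ ih₂ =>
      rcases Finset.mem_insert.1 hw with rfl | hw'
      · refine Or.inr ⟨?_, ?_⟩
        · rcases ih₁ with h | ⟨h, -⟩ <;> exact h
        · rcases ih₂ with h | ⟨-, h⟩ <;> exact h
      · rcases ih₁ with h | ⟨h, h'⟩ <;> rcases ih₂ with k | ⟨k, k'⟩
        · exact Or.inl (.step hw' h k)
        · exact Or.inr ⟨.step hw' h k, k'⟩
        · exact Or.inr ⟨h, .step hw' h' k⟩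
        · exact Or.inr ⟨h, k'⟩
  · rintro (h | ⟨h, h'⟩)
    · exact h.mono (Finset.subset_insert _ _)
    · exact .step (Finset.mem_insert_self _ _) (h.mono (Finset.subset_insert _ _))
        (h'.mono (Finset.subset_insert _ _))

end Conn

section GraphIdeals

variable (K : Type) [Field K] {V : Type} (G : SimpleGraph V)

/-- The ideal of the intermediate graph with deleted vertices `T` and eliminated vertices `W`:
generated by the variables at `T` and the minors `x_i y_j - x_j y_i` for `i, j` joined by a
path of `G` with interior in `W`. -/
def gI (T W : Finset V) : Ideal (MvPolynomial (V ⊕ V) K) :=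
  relI K (T : Set V) (Conn G.Adj W)

/-- The graph `G` with all edges meeting `T` removed (the vertices of `T` become isolated). -/
def delT (T : Finset V) : SimpleGraph V where
  Adj i j := G.Adj i j ∧ i ∉ T ∧ j ∉ T
  symm := ⟨fun _ _ h => ⟨h.1.symm, h.2.2, h.2.1⟩⟩
  loopless := ⟨fun _ h => G.loopless.irrefl _ h.1⟩

variable {K G}

lemma gI_mono {T T' W W' : Finset V} (hT : T ⊆ T') (hW : W ⊆ W') : gI K G T W ≤ gI K G T' W' :=
  relI_mono (Finset.coe_subset.2 hT) fun _ _ h => h.mono hW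

lemma gI_le_mIdeal {T W : Finset V} : gI K G T W ≤ mIdeal K (V ⊕ V) := relI_le_mIdeal

lemma delT_anti {T T' : Finset V} (h : T ⊆ T') : delT G T' ≤ delT G T :=
  fun _ _ h' => ⟨h'.1, fun hi => h'.2.1 (h hi), fun hi => h'.2.2 (h hi)⟩

variable [DecidableEq V]

/-- One elimination step: `v` is either eliminated (its neighbours become a clique) or deleted. -/
lemma gI_elim (T W : Finset V) (v : V) :
    gI K G T W = gI K G T (insert v W) ⊓ gI K G (insert v T) W := by
  simp only [gI]
  rw [relI_elim v (fun i j h => h.symm fun i j h => h.symm), conn_insert, Finset.coe_insert]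

lemma gI_elim_sup (T W : Finset V) (v : V) :
    gI K G T (insert v W) ⊔ gI K G (insert v T) W = gI K G (insert v T) (insert v W) := by
  simp only [gI]
  rw [conn_insert, Finset.coe_insert, relI_elim_sup]

lemma gI_sup_self (T T' W : Finset V) : gI K G T W ⊔ gI K G T' W = gI K G (T ∪ T') W := by
  simp only [gI]
  rw [relI_sup, Finset.coe_union]
  simp

lemma xv_mul_mem_gI {T W : Finset V} {v : V} {g : MvPolynomial (V ⊕ V) K}
    (hg : g ∈ gI K G T (insert v W)) : xv K v * g ∈ gI K G T W := by
  simp only [gI, conn_insert] at hg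
  exact xv_mul_mem_of_cliqueAt (fun i j h => h.symm fun i j h => h.symm) hg

lemma prod_xv_mul_mem_gI {T W : Finset V} : ∀ {g : MvPolynomial (V ⊕ V) K},
    g ∈ gI K G T W → (∏ v ∈ W, xv K v) * g ∈ gI K G T ∅ := by
  induction W using Finset.induction_on with
  | empty => intro g hg; simpa using hg
  | insert v W hv ih =>
    intro g hg
    rw [Finset.prod_insert hv, mul_comm (xv K v), mul_assoc]
    exact ih (xv_mul_mem_gI hg)

/-- A vertex with at most one remaining neighbour can be eliminated freely. -/
lemma gI_insert_of_unique {T W : Finset V} (hTW : Disjoint T W) {v : V}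
    (hv : ∀ u u', (delT G T).Adj u v → (delT G T).Adj u' v → u = u') (hvT : v ∉ T) :
    gI K G T (insert v W) = gI K G T W := by
  refine le_antisymm ?_ (gI_mono le_rfl (Finset.subset_insert _ _))
  refine relI_le (fun i hi => xv_mem_relI hi) (fun i hi => yv_mem_relI hi) fun i j h => ?_
  by_cases hi : i ∈ T
  · exact minor_mem_relI_left _ hi
  by_cases hj : j ∈ T
  · exact minor_mem_relI_right _ hj
  rw [conn_insert] at h
  rcases h with h | ⟨h, h'⟩
  · exact minor_mem_relI h
  obtain ⟨u, hu, huv, h₁⟩ := h.last hTW hi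
  obtain ⟨u', hu', huv', h₂⟩ := (h'.symm fun i j h => h.symm).last hTW hj
  obtain rfl := hv u u' ⟨huv, hu, hvT⟩ ⟨huv', hu', hvT⟩
  rcases h₁ with rfl | ⟨huW, h₁⟩ <;> rcases h₂ with rfl | ⟨_, h₂⟩
  · rw [minor_self]; exact Ideal.zero_mem _
  · exact minor_mem_relI (h₂.symm fun i j h => h.symm)
  · exact minor_mem_relI h₁
  · exact minor_mem_relI (.step huW h₁ (h₂.symm fun i j h => h.symm))

/-- A representative of the connected component of a vertex. -/
def rep (H : SimpleGraph V) (v : V) : V := (H.connectedComponentMk v).out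

omit [DecidableEq V] in
lemma reachable_rep (H : SimpleGraph V) (v : V) : H.Reachable (rep H v) v :=
  SimpleGraph.ConnectedComponent.exact (Quot.out_eq _)

omit [DecidableEq V] in
lemma rep_eq_iff {H : SimpleGraph V} {u v : V} : rep H u = rep H v ↔ H.Reachable u v := by
  refine ⟨fun h => ?_, fun h => ?_⟩
  · exact (reachable_rep H u).symm.trans (h ▸ reachable_rep H v)
  · rw [rep, rep, SimpleGraph.ConnectedComponent.sound h]

omit [DecidableEq V] in
lemma reachable_of_conn {T W : Finset V} (hTW : Disjoint T W) {i j : V} (hi : i ∉ T) (hj : j ∉ T)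
    (h : Conn G.Adj W i j) : (delT G T).Reachable i j := by
  induction h with
  | base h => exact SimpleGraph.Adj.reachable ⟨h, hi, hj⟩
  | step hw _ _ ih₁ ih₂ =>
    have hw' := Finset.disjoint_right.1 hTW hw
    exact (ih₁ hi hw').trans (ih₂ hw' hj)

variable [Fintype V]

lemma conn_of_reachable {T : Finset V} {i j : V} (hij : i ≠ j)
    (h : (delT G T).Reachable i j) : Conn G.Adj Tᶜ i j := by
  obtain ⟨p⟩ := h
  induction p with
  | nil => exact absurd rfl hij
  | @cons i k j h p ih =>
    by_cases hk : k = j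
    · subst hk; exact .base h.1
    · exact .step (by simpa using h.2.2) (.base h.1) (ih hk)

/-- The variables at the vertices of `T`. -/
def varsOf (T : Finset V) : Finset (V ⊕ V) := T.disjSum T

/-- When every vertex outside `T` is eliminated, the ideal is that of a disjoint union of
cliques, one for each connected component of `G - T`. -/
lemma gI_union_compl (T B : Finset V) :
    gI K G (T ∪ B) Tᶜ = cliqueI K (varsOf (T ∪ B)) (T ∪ B)ᶜ (rep (delT G T)) := by
  apply le_antisymm
  · have hx : ∀ i ∈ T ∪ B, xv K i ∈ cliqueI K (varsOf (T ∪ B)) (T ∪ B)ᶜ (rep (delT G T)) :=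
      fun i hi => X_mem_cliqueI (by simpa [varsOf] using hi)
    have hy : ∀ i ∈ T ∪ B, yv K i ∈ cliqueI K (varsOf (T ∪ B)) (T ∪ B)ᶜ (rep (delT G T)) :=
      fun i hi => X_mem_cliqueI (by simpa [varsOf] using hi)
    refine relI_le hx hy fun i j h => ?_
    by_cases hi : i ∈ T ∪ B
    · exact Ideal.sub_mem _ (Ideal.mul_mem_right _ _ (hx i hi)) (Ideal.mul_mem_left _ _ (hy i hi))
    by_cases hj : j ∈ T ∪ B
    · exact Ideal.sub_mem _ (Ideal.mul_mem_left _ _ (hy j hj)) (Ideal.mul_mem_right _ _ (hx j hj))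
    refine minor_mem_cliqueI (Finset.mem_compl.2 hi) (Finset.mem_compl.2 hj)
      (rep_eq_iff.2 (reachable_of_conn disjoint_compl_right (fun h => hi ?_) (fun h => hj ?_) h))
    exacts [Finset.mem_union_left _ h, Finset.mem_union_left _ h]
  · refine cliqueI_le ?_ fun i hi j hj h => ?_
    · rintro (i | i) hi
      · exact xv_mem_relI (by simpa [varsOf] using hi)
      · exact yv_mem_relI (by simpa [varsOf] using hi)
    · by_cases hij : i = j
      · subst hij; rw [minor_self]; exact Ideal.zero_mem _
      · exact minor_mem_relI (conn_of_reachable hij (rep_eq_iff.1 h))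

lemma gI_compl (T : Finset V) : gI K G T Tᶜ = cliqueI K (varsOf T) Tᶜ (rep (delT G T)) := by
  simpa using gI_union_compl (K := K) (G := G) T ∅

lemma varsOf_compl (T : Finset V) : ∀ i ∈ Tᶜ, Sum.inl i ∉ varsOf T ∧ Sum.inr i ∉ varsOf T := by
  intro i hi
  simpa [varsOf] using hi

omit [DecidableEq V] [Fintype V] in
lemma card_varsOf (T : Finset V) : (varsOf T).card = 2 * T.card := by
  rw [varsOf, Finset.card_disjSum, two_mul]

lemma gI_compl_isPrime (T : Finset V) : (gI K G T Tᶜ).IsPrime := by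
  rw [gI_compl]
  exact cliqueI_isPrime (varsOf_compl T)

/-- Induction on the number of vertices not yet deleted or eliminated. -/
lemma elim_induction {P : Finset V → Finset V → Prop}
    (base : ∀ T, P T Tᶜ)
    (step : ∀ T W, Disjoint T W → ∀ v ∉ T, v ∉ W → P T (insert v W) → P (insert v T) W →
      P T W)
    (T W : Finset V) (hTW : Disjoint T W) : P T W := by
  obtain ⟨d, hd⟩ : ∃ d, ((T ∪ W)ᶜ).card = d := ⟨_, rfl⟩
  induction d using Nat.strong_induction_on generalizing T W with
  | _ d ih =>
  subst hd
  rcases ((T ∪ W)ᶜ).eq_empty_or_nonempty with h | ⟨v, hv⟩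
  · have hW : W = Tᶜ := by
      ext v
      have : v ∈ T ∪ W := by
        by_contra h'
        simpa [h] using Finset.mem_compl.2 h'
      rw [Finset.mem_compl]
      rcases Finset.mem_union.1 this with h1 | h1
      · simp [h1, Finset.disjoint_left.1 hTW h1]
      · simp [h1, Finset.disjoint_right.1 hTW h1]
    rw [hW]
    exact base T
  · have hv' : v ∉ T ∧ v ∉ W := by simpa using hv
    have hlt : ∀ T' W' : Finset V, insert v (T ∪ W) ⊆ T' ∪ W' →
        ((T' ∪ W')ᶜ).card < ((T ∪ W)ᶜ).card := by
      intro T' W' h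
      refine Finset.card_lt_card ((Finset.ssubset_iff_of_subset ?_).2 ⟨v, hv, ?_⟩)
      · exact Finset.compl_subset_compl.2 ((Finset.subset_insert _ _).trans h)
      · rw [Finset.mem_compl, not_not]
        exact h (Finset.mem_insert_self _ _)
    refine step T W hTW v hv'.1 hv'.2 ?_ ?_
    · refine ih _ (hlt _ _ ?_) _ _ ?_ rfl
      · rw [Finset.union_insert]
      · rw [Finset.disjoint_insert_right]; exact ⟨hv'.1, hTW⟩
    · refine ih _ (hlt _ _ ?_) _ _ ?_ rfl
      · rw [Finset.insert_union]
      · rw [Finset.disjoint_insert_left]; exact ⟨hv'.2, hTW⟩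

end GraphIdeals

/-! ### Counting components in a forest -/

section Forest

variable {V : Type} [DecidableEq V] {G : SimpleGraph V}

omit [DecidableEq V] in
/-- In a forest, deleting a vertex separates its neighbours. -/
lemma not_reachable_of_adj (hG : G.IsAcyclic) {T : Finset V} {u u' v : V} (hv : v ∈ T)
    (hu : G.Adj u v) (hu' : G.Adj u' v) (h : u ≠ u') : ¬(delT G T).Reachable u u' := by
  intro hr
  have hb := SimpleGraph.isAcyclic_iff_forall_isBridge.1 hG ((SimpleGraph.mem_edgeSet G).2 hu)
  rw [SimpleGraph.isBridge_iff] at hb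
  apply hb
  have h1 : ∀ a b, (delT G T).Adj a b → (G.deleteEdges {s(u, v)}).Adj a b := by
    intro a b hab
    rw [SimpleGraph.deleteEdges_adj]
    refine ⟨hab.1, fun h' => ?_⟩
    rcases Sym2.eq_iff.1 (Set.mem_singleton_iff.1 h') with ⟨-, rfl⟩ | ⟨rfl, -⟩
    exacts [hab.2.2 hv, hab.2.1 hv]
  refine (hr.mono (fun a b => h1 a b)).trans (SimpleGraph.Adj.reachable ?_)
  rw [SimpleGraph.deleteEdges_adj]
  refine ⟨hu', fun h' => ?_⟩
  rcases Sym2.eq_iff.1 (Set.mem_singleton_iff.1 h') with ⟨h'', -⟩ | ⟨h'', h3⟩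
  · exact h h''.symm
  · exact hu.ne h3.symm

lemma exists_adj_of_reachable {T : Finset V} {z v : V} (hz : z ≠ v)
    (h : (delT G T).Reachable z v) :
    ∃ u, (delT G T).Adj u v ∧ (delT G (insert v T)).Reachable z u := by
  obtain ⟨p⟩ := h
  induction p with
  | nil => exact absurd rfl hz
  | @cons z k v h p ih =>
    by_cases hk : k = v
    · subst hk; exact ⟨z, h, .refl _⟩
    · obtain ⟨u, hu, hku⟩ := ih hk
      refine ⟨u, hu, (SimpleGraph.Adj.reachable ?_).trans hku⟩
      exact ⟨h.1, by simp [hz, h.2.1], by simp [hk, h.2.2]⟩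

lemma reachable_insert_of_not {T : Finset V} {z z' v : V} (hz : ¬(delT G T).Reachable z v)
    (h : (delT G T).Reachable z z') : (delT G (insert v T)).Reachable z z' := by
  obtain ⟨p⟩ := h
  induction p with
  | nil => exact .refl _
  | @cons z k z' h p ih =>
    have hk : ¬(delT G T).Reachable k v := fun hk => hz (h.reachable.trans hk)
    refine (SimpleGraph.Adj.reachable ?_).trans (ih hk)
    refine ⟨h.1, ?_, ?_⟩
    · rw [Finset.mem_insert]
      rintro (rfl | h')
      exacts [hz (.refl _), h.2.1 h']
    · rw [Finset.mem_insert]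
      rintro (rfl | h')
      exacts [hk (.refl _), h.2.2 h']

variable [Fintype V]

/-- The number of connected components of `G - T`. -/
def cc (G : SimpleGraph V) (T : Finset V) : ℕ := ((Tᶜ).image (rep (delT G T))).card

/-- The neighbours of `v` in `G - T`. -/
def nbr (G : SimpleGraph V) (T : Finset V) (v : V) : Finset V := by
  classical exact Finset.univ.filter fun u => (delT G T).Adj u v

omit [DecidableEq V] in
lemma mem_nbr {T : Finset V} {u v : V} : u ∈ nbr G T v ↔ (delT G T).Adj u v := by
  simp [nbr]

lemma cc_empty (hG : G.Connected) : cc G ∅ = 1 := by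
  obtain ⟨v⟩ := hG.nonempty
  rw [cc, Finset.card_eq_one]
  refine ⟨rep (delT G ∅) v, Finset.eq_singleton_iff_unique_mem.2 ⟨?_, ?_⟩⟩
  · exact Finset.mem_image_of_mem _ (by simp)
  · intro w hw
    obtain ⟨z, -, rfl⟩ := Finset.mem_image.1 hw
    exact rep_eq_iff.2 ((hG.preconnected z v).mono fun a b h => ⟨h, by simp, by simp⟩)

/-- Deleting a vertex of a forest replaces its component by one component per neighbour. -/
lemma cc_insert (hG : G.IsAcyclic) {T : Finset V} {v : V} (hv : v ∉ T) :
    cc G (insert v T) + 1 = cc G T + (nbr G T v).card := by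
  classical
  set κ := rep (delT G T) with hκ
  set κ' := rep (delT G (insert v T)) with hκ'
  set Y := (Tᶜ).filter (fun z => ¬(delT G T).Reachable z v) with hY
  have hvY : ∀ {z}, z ∈ Y ↔ z ∉ T ∧ ¬(delT G T).Reachable z v := by simp [hY]
  -- components not containing `v` are unaffected
  have h1 : (Y.image κ').card = (Y.image κ).card := by
    have : (Y.image κ).image κ' = Y.image κ' := by
      rw [Finset.image_image]
      refine Finset.image_congr fun z hz => ?_
      have hz := (hvY.1 hz).2
      refine rep_eq_iff.2 (SimpleGraph.Reachable.symm ?_)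
      exact reachable_insert_of_not hz (reachable_rep _ _).symm
    rw [← this]
    refine Finset.card_image_of_injOn ?_
    intro a ha b hb hab
    obtain ⟨z, hz, rfl⟩ := Finset.mem_image.1 ha
    obtain ⟨z', hz', rfl⟩ := Finset.mem_image.1 hb
    have h := (rep_eq_iff.1 hab).mono (delT_anti (Finset.subset_insert v T))
    exact rep_eq_iff.2 (((reachable_rep _ z).symm.trans h).trans (reachable_rep _ z'))
  have h2 : cc G T = (Y.image κ).card + 1 := by
    have : (Tᶜ).image κ = insert (κ v) (Y.image κ) := by
      ext c
      simp only [Finset.mem_image, Finset.mem_insert, Finset.mem_compl]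
      constructor
      · rintro ⟨z, hz, rfl⟩
        by_cases h : (delT G T).Reachable z v
        · exact Or.inl (rep_eq_iff.2 h)
        · exact Or.inr ⟨z, hvY.2 ⟨hz, h⟩, rfl⟩
      · rintro (rfl | ⟨z, hz, rfl⟩)
        exacts [⟨v, hv, rfl⟩, ⟨z, (hvY.1 hz).1, rfl⟩]
    rw [cc, ← hκ, this, Finset.card_insert_of_notMem]
    intro h
    obtain ⟨z, hz, hzv⟩ := Finset.mem_image.1 h
    exact (hvY.1 hz).2 (rep_eq_iff.1 hzv)
  have hnbrT : ∀ u ∈ nbr G T v, u ∉ insert v T := by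
    intro u hu
    have hu := mem_nbr.1 hu
    rw [Finset.mem_insert, not_or]
    exact ⟨hu.ne, hu.2.1⟩
  have h3 : ((nbr G T v).image κ').card = (nbr G T v).card := by
    refine Finset.card_image_of_injOn fun a ha b hb hab => ?_
    by_contra hne
    exact not_reachable_of_adj hG (Finset.mem_insert_self v T) (mem_nbr.1 ha).1 (mem_nbr.1 hb).1
      hne (rep_eq_iff.1 hab)
  have h4 : ((insert v T)ᶜ).image κ' = Y.image κ' ∪ (nbr G T v).image κ' := by
    ext c
    simp only [Finset.mem_image, Finset.mem_union, Finset.mem_compl]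
    constructor
    · rintro ⟨z, hz, rfl⟩
      rw [Finset.mem_insert, not_or] at hz
      by_cases h : (delT G T).Reachable z v
      · obtain ⟨u, hu, hzu⟩ := exists_adj_of_reachable hz.1 h
        exact Or.inr ⟨u, mem_nbr.2 hu, (rep_eq_iff.2 hzu).symm⟩
      · exact Or.inl ⟨z, hvY.2 ⟨hz.2, h⟩, rfl⟩
    · rintro (⟨z, hz, rfl⟩ | ⟨u, hu, rfl⟩)
      · refine ⟨z, ?_, rfl⟩
        rw [Finset.mem_insert]
        rintro (rfl | h)
        exacts [(hvY.1 hz).2 (.refl _), (hvY.1 hz).1 h]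
      · exact ⟨u, hnbrT u hu, rfl⟩
  have h5 : Disjoint (Y.image κ') ((nbr G T v).image κ') := by
    rw [Finset.disjoint_left]
    intro c hc hc'
    obtain ⟨z, hz, rfl⟩ := Finset.mem_image.1 hc
    obtain ⟨u, hu, huz⟩ := Finset.mem_image.1 hc'
    refine (hvY.1 hz).2 (SimpleGraph.Reachable.trans ?_ (mem_nbr.1 hu).reachable)
    exact ((rep_eq_iff.1 huz).mono (delT_anti (Finset.subset_insert v T))).symm
  rw [h2, cc, ← hκ', h4, Finset.card_union_of_disjoint h5, h1, h3]
  omega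

omit [DecidableEq V] in
lemma nbr_card_le (T : Finset V) (v : V) : (nbr G T v).card ≤ (nbr G ∅ v).card :=
  Finset.card_le_card fun _ hu => mem_nbr.2 (delT_anti (Finset.empty_subset T) (mem_nbr.1 hu))

/-- Deleting vertices of degree at most two creates at most one new component per vertex. -/
lemma cc_le_of_subset (hG : G.IsAcyclic) {T U : Finset V}
    (h : ∀ v ∈ U, (nbr G ∅ v).card ≤ 2) : cc G (T ∪ U) + T.card ≤ cc G T + (T ∪ U).card := by
  induction U using Finset.induction_on with
  | empty => simp
  | insert v U hv ih =>
    have ih := ih fun w hw => h w (Finset.mem_insert_of_mem hw)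
    rw [Finset.union_insert]
    by_cases hvT : v ∈ T ∪ U
    · rw [Finset.insert_eq_of_mem hvT]; exact ih
    · have h1 := cc_insert hG hvT
      have h2 := nbr_card_le (G := G) (T ∪ U) v
      have h3 := h v (Finset.mem_insert_self _ _)
      rw [Finset.card_insert_of_notMem hvT]
      omega

end Forest

/-! ### Depth, dimension and nonzerodivisors for the intermediate ideals -/

section Intermediate

variable {K : Type} [Field K] {V : Type} [DecidableEq V] {G : SimpleGraph V} [Fintype V]

omit [Fintype V] in
/-- If two distinct vertices become linked only through `v`, then `v` separates them in the
forest. -/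
lemma not_reachable_of_conn (hG : G.IsAcyclic) {T W : Finset V} (hTW : Disjoint T W) {v i j : V}
    (hvW : v ∉ W) (hi : i ∉ T) (hj : j ∉ T) (hiv : i ≠ v) (hjv : j ≠ v) (hij : i ≠ j)
    (h₁ : Conn G.Adj W i v) (h₂ : Conn G.Adj W v j) (h : ¬Conn G.Adj W i j) :
    ¬(delT G (insert v T)).Reachable i j := by
  have hTW' : Disjoint (insert v T) W := Finset.disjoint_insert_left.2 ⟨hvW, hTW⟩
  have key : ∀ i, i ∉ T → i ≠ v → Conn G.Adj W i v → ∃ u, G.Adj u v ∧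
      (u = i ∨ u ∈ W ∧ Conn G.Adj W i u) ∧ (delT G (insert v T)).Reachable i u := by
    intro i hi hiv h
    obtain ⟨u, -, huv, hu⟩ := h.last hTW hi
    refine ⟨u, huv, hu, ?_⟩
    rcases hu with rfl | ⟨huW, hu⟩
    · exact .refl _
    · exact reachable_of_conn hTW' (by simp [hiv, hi]) (Finset.disjoint_right.1 hTW' huW) hu
  obtain ⟨u, hu, hui, hiu⟩ := key i hi hiv h₁
  obtain ⟨u', hu', huj, hju⟩ := key j hj hjv (h₂.symm fun i j h => h.symm)
  have huu : u ≠ u' := by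
    rintro rfl
    rcases hui with rfl | ⟨huW, hui⟩ <;> rcases huj with rfl | ⟨_, huj⟩
    · exact hij rfl
    · exact h (huj.symm fun i j h => h.symm)
    · exact h hui
    · exact h (.step huW hui (huj.symm fun i j h => h.symm))
  exact fun hr => not_reachable_of_adj hG (Finset.mem_insert_self v T) hu hu' huu
    ((hiu.symm.trans hr).trans hju)

/-- The depth of the intermediate ideals, by induction along `gI_elim`. An elimination which
changes the ideal joins neighbours of `v` lying in different components of `G - (T ∪ {v})`, so the
branch where `v` is deleted has at least as large a bound. The set `B` of vertices that are both
deleted and eliminated covers the sums `gI_elim_sup`. -/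
lemma gI_depth_aux (hG : G.IsAcyclic) (T W : Finset V) (hTW : Disjoint T W) :
    ∀ B ⊆ W, ∀ k : ℕ, k + 2 * (T ∪ B).card + ((T ∪ B)ᶜ).card ≤
      2 * Fintype.card V + (((T ∪ B)ᶜ).image (rep (delT G T))).card →
    HasDepth (mIdeal K (V ⊕ V)) k (MvPolynomial (V ⊕ V) K ⧸ gI K G (T ∪ B) W) := by
  refine elim_induction (P := fun T W => ∀ B ⊆ W, ∀ k : ℕ, k + 2 * (T ∪ B).card + ((T ∪ B)ᶜ).card ≤
      2 * Fintype.card V + (((T ∪ B)ᶜ).image (rep (delT G T))).card →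
    HasDepth (mIdeal K (V ⊕ V)) k (MvPolynomial (V ⊕ V) K ⧸ gI K G (T ∪ B) W)) ?_ ?_ T W hTW
  · intro T B _ k hk
    rw [gI_union_compl]
    refine cliqueI_depth _ _ k (varsOf_compl _) ?_
    rw [card_varsOf]
    exact hk
  · intro T W hTW v hvT hvW ih₁ ih₂ B hB k hk
    have hB' : B ⊆ insert v W := hB.trans (Finset.subset_insert _ _)
    have hvB : v ∉ B := fun h => hvW (hB h)
    by_cases hs : ∀ i j, i ∉ T ∪ B → j ∉ T ∪ B → Conn G.Adj W i v → Conn G.Adj W v j →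
        minor K i j ∈ gI K G (T ∪ B) W
    · -- eliminating `v` does not change the ideal
      have : gI K G (T ∪ B) W = gI K G (T ∪ B) (insert v W) := by
        refine le_antisymm (gI_mono le_rfl (Finset.subset_insert _ _)) ?_
        refine relI_le (fun i hi => xv_mem_relI hi) (fun i hi => yv_mem_relI hi) fun i j h => ?_
        by_cases hi : i ∈ T ∪ B
        · exact minor_mem_relI_left _ hi
        by_cases hj : j ∈ T ∪ B
        · exact minor_mem_relI_right _ hj
        rw [conn_insert] at h
        rcases h with h | ⟨h, h'⟩
        exacts [minor_mem_relI h, hs i j hi hj h h']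
      rw [this]
      exact ih₁ B hB' k hk
    · push Not at hs
      obtain ⟨i, j, hi, hj, h₁, h₂, hm⟩ := hs
      have hij : i ≠ j := by
        rintro rfl
        exact hm (by rw [minor_self]; exact Ideal.zero_mem _)
      have hc : ¬Conn G.Adj W i j := fun h => hm (minor_mem_relI h)
      have hiv : i ≠ v := by rintro rfl; exact hc h₂
      have hjv : j ≠ v := by rintro rfl; exact hc h₁
      have hiT : i ∉ T := fun h => hi (Finset.mem_union_left _ h)
      have hjT : j ∉ T := fun h => hj (Finset.mem_union_left _ h)
      have hsep := not_reachable_of_conn hG hTW hvW hiT hjT hiv hjv hij h₁ h₂ hc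
      have hriv := reachable_of_conn hTW hiT hvT h₁
      have hrjv := (reachable_of_conn hTW hvT hjT h₂).symm
      set Z := (T ∪ B)ᶜ with hZ
      have hvTB : v ∉ T ∪ B := by simp [hvT, hvB]
      have hvZ : v ∈ Z := Finset.mem_compl.2 hvTB
      have hiZ : i ∈ Z.erase v := Finset.mem_erase.2 ⟨hiv, Finset.mem_compl.2 hi⟩
      have hjZ : j ∈ Z.erase v := Finset.mem_erase.2 ⟨hjv, Finset.mem_compl.2 hj⟩
      have hZv : (insert v (T ∪ B))ᶜ = Z.erase v := Finset.compl_insert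
      have himg : (Z.erase v).image (rep (delT G T)) = Z.image (rep (delT G T)) := by
        refine le_antisymm (Finset.image_subset_image (Finset.erase_subset _ _)) fun c hc => ?_
        obtain ⟨z, hz, rfl⟩ := Finset.mem_image.1 hc
        by_cases hzv : z = v
        · subst hzv
          exact Finset.mem_image.2 ⟨i, hiZ, rep_eq_iff.2 hriv⟩
        · exact Finset.mem_image_of_mem _ (Finset.mem_erase.2 ⟨hzv, hz⟩)
      -- the classes of `i` and `j` become distinct when `v` is deleted
      have hlt : (Z.image (rep (delT G T))).card + 1 ≤
          ((Z.erase v).image (rep (delT G (insert v T)))).card := by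
        rw [← himg]
        have hfac : (Z.erase v).image (rep (delT G T)) =
            ((Z.erase v).image (rep (delT G (insert v T)))).image (rep (delT G T)) := by
          rw [Finset.image_image]
          refine Finset.image_congr fun z _ => ?_
          exact rep_eq_iff.2 ((reachable_rep _ z).mono (delT_anti (Finset.subset_insert v T))).symm
        rw [hfac]
        refine Nat.lt_of_le_of_ne Finset.card_image_le fun h => hsep ?_
        have hinj := Finset.card_image_iff.1 h
        refine rep_eq_iff.1 (hinj (Finset.mem_coe.2 (Finset.mem_image_of_mem _ hiZ))
          (Finset.mem_coe.2 (Finset.mem_image_of_mem _ hjZ)) (rep_eq_iff.2 ?_))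
        have hm := delT_anti (G := G) (Finset.subset_insert v T)
        exact (((reachable_rep _ i).mono hm).trans (hriv.trans hrjv.symm)).trans
          ((reachable_rep _ j).mono hm).symm
      have hZc : (Z.erase v).card + 1 = Z.card := Finset.card_erase_add_one hvZ
      have hcard : (insert v (T ∪ B)).card = (T ∪ B).card + 1 := Finset.card_insert_of_notMem hvTB
      rcases k with _ | k
      · intro i hi; omega
      rw [gI_elim _ _ v]
      refine HasDepth.inf (ih₁ B hB' (k + 1) hk) ?_ ?_
      · have := ih₂ B hB (k + 1)
        rw [Finset.insert_union, hZv] at this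
        exact this (by omega)
      · rw [gI_elim_sup]
        have := ih₁ (insert v B) (Finset.insert_subset_insert v hB) k
        rw [Finset.union_insert, hZv] at this
        exact this (by rw [himg]; omega)

/-- In a forest, the depth of `S / gI T W` is at least `n - |T| + c(T) = dim S/P_T`, for every
set `W` of eliminated vertices. -/
lemma gI_depth (hG : G.IsAcyclic) {T W : Finset V} (hTW : Disjoint T W) {k : ℕ}
    (hk : k + T.card ≤ Fintype.card V + cc G T) :
    HasDepth (mIdeal K (V ⊕ V)) k (MvPolynomial (V ⊕ V) K ⧸ gI K G T W) := by
  have := gI_depth_aux (K := K) hG T W hTW ∅ (Finset.empty_subset _) k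
  rw [Finset.union_empty] at this
  refine this ?_
  have h1 := Finset.card_add_card_compl T
  rw [cc] at hk
  omega

/-- `dim S/P_T ≤ n - |T| + c(T)`. -/
lemma gI_compl_dim {T : Finset V} {d : ℕ} (hd : Fintype.card V + cc G T ≤ d + T.card) :
    ringKrullDim (MvPolynomial (V ⊕ V) K ⧸ gI K G T Tᶜ) ≤ d := by
  rw [gI_compl]
  refine cliqueI_dim _ _ d (varsOf_compl _) ?_
  have h1 := Finset.card_add_card_compl T
  rw [card_varsOf]
  rw [cc] at hd
  omega

/-- Every prime containing an intermediate ideal contains one of the primes `P_T`. -/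
lemma exists_le_of_gI_le {p : Ideal (MvPolynomial (V ⊕ V) K)} (hp : p.IsPrime) (T W : Finset V)
    (hTW : Disjoint T W) (h : gI K G T W ≤ p) :
    ∃ T', T ⊆ T' ∧ Disjoint T' W ∧ gI K G T' T'ᶜ ≤ p := by
  revert h
  refine elim_induction (P := fun T W => gI K G T W ≤ p →
    ∃ T', T ⊆ T' ∧ Disjoint T' W ∧ gI K G T' T'ᶜ ≤ p) ?_ ?_ T W hTW
  · exact fun T h => ⟨T, le_rfl, disjoint_compl_right, h⟩
  · intro T W _ v _ _ ih₁ ih₂ h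
    rw [gI_elim T W v] at h
    rcases hp.inf_le.1 h with h | h
    · obtain ⟨T', h1, h2, h3⟩ := ih₁ h
      exact ⟨T', h1, h2.mono_right (Finset.subset_insert _ _), h3⟩
    · obtain ⟨T', h1, h2, h3⟩ := ih₂ h
      exact ⟨T', (Finset.subset_insert _ _).trans h1, h2, h3⟩

/-- Vertices in `L` have at most one neighbour left, so they never need to be deleted; only the
primes `P_T` with `T ∩ L = ∅` matter. -/
lemma gI_nonzerodivisor {L : Finset V} {f : MvPolynomial (V ⊕ V) K} (T W : Finset V)
    (hTW : Disjoint T W)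
    (hf : ∀ T', T ⊆ T' → Disjoint T' L → f ∉ gI K G T' T'ᶜ)
    (hL : ∀ v ∈ L, (nbr G T v).card ≤ 1) (hTL : Disjoint T L) :
    ∀ g, f * g ∈ gI K G T W → g ∈ gI K G T W := by
  revert hf hL hTL
  refine elim_induction (P := fun T W => (∀ T', T ⊆ T' → Disjoint T' L → f ∉ gI K G T' T'ᶜ) →
    (∀ v ∈ L, (nbr G T v).card ≤ 1) → Disjoint T L →
    ∀ g, f * g ∈ gI K G T W → g ∈ gI K G T W) ?_ ?_ T W hTW
  · intro T hf _ hTL g hg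
    exact ((gI_compl_isPrime T).mem_or_mem hg).resolve_left (hf T le_rfl hTL)
  · intro T W hTW v hvT hvW ih₁ ih₂ hf hL hTL g hg
    by_cases hv : v ∈ L
    · have hu : ∀ u u', (delT G T).Adj u v → (delT G T).Adj u' v → u = u' := fun u u' hu hu' =>
        Finset.card_le_one.1 (hL v hv) u (mem_nbr.2 hu) u' (mem_nbr.2 hu')
      rw [← gI_insert_of_unique hTW hu hvT] at hg ⊢
      exact ih₁ hf hL hTL g hg
    · rw [gI_elim T W v] at hg ⊢
      refine ⟨ih₁ hf hL hTL g hg.1, ih₂ ?_ ?_ ?_ g hg.2⟩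
      · exact fun T' h => hf T' ((Finset.subset_insert _ _).trans h)
      · refine fun u hu => (Finset.card_le_card fun w hw => ?_).trans (hL u hu)
        exact mem_nbr.2 (delT_anti (Finset.subset_insert _ _) (mem_nbr.1 hw))
      · exact Finset.disjoint_insert_left.2 ⟨hv, hTL⟩

/-- A `K`-point of `V(P_T)`: the parameter `c` is constant on components of `G - T`. -/
lemma gI_compl_le_ker {T : Finset V} (x c : V → K)
    (hc : ∀ i j, (delT G T).Reachable i j → c i = c j) (hx : ∀ i ∈ T, x i = 0) :
    gI K G T Tᶜ ≤ RingHom.ker (eval (Sum.elim x fun i => x i * c i)) := by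
  rw [gI_compl]
  refine cliqueI_le ?_ fun i _ j _ h => ?_
  · rintro (i | i) hi
    · simp [RingHom.mem_ker, hx i (by simpa [varsOf] using hi)]
    · simp [RingHom.mem_ker, hx i (by simpa [varsOf] using hi)]
  · rw [RingHom.mem_ker, eval_minor, Sum.elim_inl, Sum.elim_inr, Sum.elim_inl, Sum.elim_inr,
      hc i j (rep_eq_iff.1 h)]
    ring

end Intermediate

/-! ### A criterion for approximate Cohen-Macaulayness -/

lemma dim_quot_le_of_primes {R : Type} [CommRing R] {J : Ideal R} {d : WithBot ℕ∞}
    (h : ∀ p : Ideal R, p.IsPrime → J ≤ p → ringKrullDim (R ⧸ p) ≤ d) :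
    ringKrullDim (R ⧸ J) ≤ d := by
  rw [ringKrullDim_quotient]
  refine iSup_le fun l => ?_
  refine le_trans ?_ (h l.head.1.asIdeal l.head.1.isPrime l.head.2)
  rw [ringKrullDim_quotient]
  let l' : LTSeries (PrimeSpectrum.zeroLocus (l.head.1.asIdeal : Set R)) :=
    { length := l.length
      toFun := fun i => ⟨(l i).1, by
        have : l.head ≤ l i := LTSeries.head_le l i
        exact this⟩
      step := fun i => l.step i }
  exact le_iSup_of_le (α := WithBot ℕ∞) l' le_rfl

/-- An element regular modulo `U` avoids the minimal primes of `U`, so primes containing both have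
dimension at least one less than the bound for `U`. -/
lemma dim_le_of_minimal {R : Type} [CommRing R] {U p : Ideal R} [p.IsPrime] {f : R} {D : ℕ}
    (hreg : ∀ g, f * g ∈ U → g ∈ U)
    (hdim : ∀ q : Ideal R, q.IsPrime → U ≤ q → ringKrullDim (R ⧸ q) ≤ ((D + 1 : ℕ) : WithBot ℕ∞))
    (hU : U ≤ p) (hf : f ∈ p) : ringKrullDim (R ⧸ p) ≤ D := by
  obtain ⟨q, hq, hqp⟩ := Ideal.exists_minimalPrimes_le hU
  have := hq.1.1
  have hfq : f ∉ q := by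
    intro h
    obtain ⟨y, hy, hxy⟩ := Ideal.exists_mul_mem_of_mem_minimalPrimes hq h
    exact hy (hreg y hxy)
  have hlt : q < p := lt_of_le_of_ne hqp fun h => hfq (h ▸ hf)
  exact le_of_add_one_le ((dim_succ_le_of_lt hlt).trans (hdim q hq.1.1 hq.1.2))

/-- Write `J = Q ∩ U`, where `S/U` is Cohen-Macaulay of dimension `D + 1` and `dim S/Q ≤ D`.
A form `f ∈ Q` that is regular modulo `U` satisfies `J : f ^ m = U`, so
`0 → S/U → S/J → S/(J + (f ^ m)) → 0` shows that `S/(J + (f ^ m))` has depth `≥ D`. -/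
lemma isACM_of {K σ : Type} [Field K] [Finite σ] {J U Q : Ideal (MvPolynomial σ K)}
    {f : MvPolynomial σ K} {d D : ℕ} (hd : 0 < d) (hf : f.IsHomogeneous d) (hJU : J ≤ U)
    (hfQ : f ∈ Q) (hQU : Q ⊓ U ≤ J) (hreg : ∀ g, f * g ∈ U → g ∈ U)
    (hU : HasDepth (mIdeal K σ) (D + 1) (MvPolynomial σ K ⧸ U))
    (hJ : HasDepth (mIdeal K σ) D (MvPolynomial σ K ⧸ J))
    (hdim : ∀ p : Ideal (MvPolynomial σ K), p.IsPrime → J ≤ p →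
      ringKrullDim (MvPolynomial σ K ⧸ p) ≤ ((D + 1 : ℕ) : WithBot ℕ∞))
    (hQ : ∀ p : Ideal (MvPolynomial σ K), p.IsPrime → Q ≤ p →
      ringKrullDim (MvPolynomial σ K ⧸ p) ≤ (D : WithBot ℕ∞))
    (hUm : U ≤ mIdeal K σ) : IsACM K J := by
  have hdimJ : ringKrullDim (MvPolynomial σ K ⧸ J) = ((D + 1 : ℕ) : WithBot ℕ∞) :=
    le_antisymm (dim_quot_le_of_primes hdim) ((hU.le_dim hUm).trans (dim_quot_anti hJU))
  have hreg' : ∀ m g, f ^ m * g ∈ U → g ∈ U := by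
    intro m
    induction m with
    | zero => intro g hg; simpa using hg
    | succ m ih =>
      intro g hg
      rw [pow_succ, mul_assoc] at hg
      exact hreg g (ih _ hg)
  have hfm := homogeneous_mem_mIdeal hd hf
  refine ⟨d, f, hd, hf, fun m hm => ?_⟩
  have hm0 : m ≠ 0 := by omega
  have hcolon : ∀ g, f ^ m * g ∈ J ↔ g ∈ U := fun g =>
    ⟨fun h => hreg' m g (hJU h), fun h => hQU ⟨Ideal.mul_mem_right _ _
      (Ideal.pow_mem_of_mem Q hfQ m (by omega)), Ideal.mul_mem_left _ _ h⟩⟩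
  have hle : J ⊔ Ideal.span {f ^ m} ≤ mIdeal K σ :=
    sup_le (hJU.trans hUm) ((Ideal.span_singleton_le_iff_mem _).2
      (Ideal.pow_mem_of_mem _ hfm m (by omega)))
  have hdim' : ringKrullDim (MvPolynomial σ K ⧸ (J ⊔ Ideal.span {f ^ m})) ≤ D := by
    refine dim_quot_le_of_primes fun p hp hpJ => ?_
    have hfp : f ∈ p := hp.mem_of_pow_mem m
      (hpJ (Ideal.mem_sup_right (Ideal.mem_span_singleton_self _)))
    rcases hp.inf_le.1 (hQU.trans (le_sup_left.trans hpJ)) with h | h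
    · exact hQ p hp h
    · exact dim_le_of_minimal hreg (fun q hq hUq => hdim q hq (hJU.trans hUq)) h hfp
  obtain ⟨h1, h2⟩ := depth_eq_of hle (HasDepth.quot_of_colon hcolon hU hJ) hdim'
  refine ⟨?_, ?_⟩
  · rw [IsCMQuot, h1, h2]
  · rw [h2, hdimJ]; push_cast; rfl

/-! ### Three-star-like trees are approximately Cohen-Macaulay -/

section Star

variable {K : Type} [Field K] {V : Type} [DecidableEq V] {G : SimpleGraph V} [Fintype V]

lemma dim_prime_le {W : Finset V} {d : ℕ}
    (h : ∀ T : Finset V, Disjoint T W → Fintype.card V + cc G T ≤ d + T.card)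
    (p : Ideal (MvPolynomial (V ⊕ V) K)) (hp : p.IsPrime) (hle : gI K G ∅ W ≤ p) :
    ringKrullDim (MvPolynomial (V ⊕ V) K ⧸ p) ≤ d := by
  obtain ⟨T, -, hT, hTp⟩ := exists_le_of_gI_le hp ∅ W (Finset.disjoint_empty_left W) hle
  exact (dim_quot_anti hTp).trans (gI_compl_dim (h T hT))

omit [DecidableEq V] [Fintype V] in
lemma minor_isHomogeneous (i j : V) : (minor K i j).IsHomogeneous 2 :=
  ((isHomogeneous_X K _).mul (isHomogeneous_X K _)).sub
    ((isHomogeneous_X K _).mul (isHomogeneous_X K _))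

omit [DecidableEq V] in
lemma mem_nbr_empty {u v : V} : u ∈ nbr G ∅ v ↔ G.Adj u v := by
  rw [mem_nbr]
  exact ⟨fun h => h.1, fun h => ⟨h, by simp, by simp⟩⟩

lemma cc_singleton (hG : G.IsTree) (v : V) : cc G {v} = (nbr G ∅ v).card := by
  have h := cc_insert hG.isAcyclic (Finset.notMem_empty v)
  rw [cc_empty hG.connected, insert_empty_eq] at h
  omega

lemma nbr_singleton_card {u a : V} (h : G.Adj u a) :
    (nbr G {a} u).card + 1 = (nbr G ∅ u).card := by
  have ha : a ∉ nbr G {a} u := fun h => (mem_nbr.1 h).2.1 (Finset.mem_singleton_self a)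
  have : nbr G ∅ u = insert a (nbr G {a} u) := by
    ext w
    rw [mem_nbr_empty, Finset.mem_insert, mem_nbr]
    constructor
    · intro hw
      by_cases hwa : w = a
      · exact Or.inl hwa
      · exact Or.inr ⟨hw, by simpa using hwa, by simpa using h.ne⟩
    · rintro (rfl | hw)
      exacts [h.symm, hw.1]
  rw [this, Finset.card_insert_of_notMem ha]

/-- Two neighbours `u, w` of `a`, of degree at most two, make `f_{uw}` regular modulo the ideal of
`G - a`; the second summand does not interfere when `p` lies in another component of `G - a`. -/
lemma minor_regular (hG : G.IsAcyclic) {a u w p q : V} (hu : G.Adj u a) (hw : G.Adj w a)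
    (huw : u ≠ w) (hdu : (nbr G ∅ u).card ≤ 2) (hdw : (nbr G ∅ w).card ≤ 2)
    (hpu : ¬(delT G {a}).Reachable p u) (hpw : ¬(delT G {a}).Reachable p w) :
    ∀ g, (minor K u w + minor K p q) * g ∈ gI K G {a} ∅ → g ∈ gI K G {a} ∅ := by
  classical
  refine gI_nonzerodivisor (L := {u, w}) {a} ∅ (Finset.disjoint_empty_right _) ?_ ?_ ?_
  · intro T' haT' hT' hmem
    have huT : u ∉ T' := fun h => Finset.disjoint_left.1 hT' h (by simp)
    have hwT : w ∉ T' := fun h => Finset.disjoint_left.1 hT' h (by simp)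
    have haT : a ∈ T' := haT' (Finset.mem_singleton_self a)
    have hnr := not_reachable_of_adj hG haT hw hu huw.symm
    have hmono := delT_anti (G := G) haT'
    -- the point `(1, 1)` on the component of `u`, `(1, 0)` on that of `w`, and `0` elsewhere
    have h0 := gI_compl_le_ker (K := K) (G := G) (T := T')
      (fun i => if i ∉ T' ∧ ((delT G T').Reachable i u ∨ (delT G T').Reachable i w) then 1 else 0)
      (fun i => if (delT G T').Reachable i u then 1 else 0)
      (fun i j h => by
        have : (delT G T').Reachable i u ↔ (delT G T').Reachable j u :=
          ⟨fun h' => h.symm.trans h', fun h' => h.trans h'⟩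
        simp only [this])
      (fun i hi => by simp [hi]) hmem
    have hp1 : ¬(delT G T').Reachable p u := fun h => hpu (h.mono hmono)
    have hp2 : ¬(delT G T').Reachable p w := fun h => hpw (h.mono hmono)
    rw [RingHom.mem_ker, map_add, eval_minor, eval_minor] at h0
    simp [huT, hwT, hnr, hp1, hp2] at h0
  · intro v hv
    rcases Finset.mem_insert.1 hv with rfl | hv
    · have := nbr_singleton_card hu; omega
    · rw [Finset.mem_singleton] at hv
      subst hv
      have := nbr_singleton_card hw; omega
  · rw [Finset.disjoint_singleton_left]
    simp [hu.ne.symm, hw.ne.symm]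

/-- A path: `S/J_G` is Cohen-Macaulay of dimension `n + 1`, and `x_l` is regular for a vertex `l`
of degree at most one. -/
lemma isACM_of_degree_le_two (hG : G.IsTree) (h : ∀ v, (nbr G ∅ v).card ≤ 2) :
    IsACM K (gI K G ∅ ∅) := by
  classical
  obtain ⟨l, hl⟩ : ∃ l, (nbr G ∅ l).card ≤ 1 := by
    obtain ⟨v⟩ := hG.connected.nonempty
    by_cases hV : Nontrivial V
    · obtain ⟨l, hl⟩ := hG.exists_vert_degree_one_of_nontrivial
      refine ⟨l, ?_⟩
      rw [← hl, ← SimpleGraph.card_neighborFinset_eq_degree]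
      refine Finset.card_le_card fun u hu => ?_
      rw [SimpleGraph.mem_neighborFinset]
      exact (mem_nbr_empty.1 hu).symm
    · rw [not_nontrivial_iff_subsingleton] at hV
      exact ⟨v, Finset.card_le_one.2 fun a _ b _ => Subsingleton.elim a b⟩
  have hdepth : HasDepth (mIdeal K (V ⊕ V)) (Fintype.card V + 1)
      (MvPolynomial (V ⊕ V) K ⧸ gI K G ∅ ∅) := by
    refine gI_depth hG.isAcyclic (Finset.disjoint_empty_left _) ?_
    rw [cc_empty hG.connected]; simp
  refine isACM_of (U := gI K G ∅ ∅) (Q := ⊤) (f := xv K l) (D := Fintype.card V) one_pos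
    (isHomogeneous_X K _) le_rfl Submodule.mem_top inf_le_right ?_ hdepth
    (hdepth.mono (by omega)) (dim_prime_le fun T _ => ?_) ?_ gI_le_mIdeal
  · refine gI_nonzerodivisor (L := {l}) ∅ ∅ (Finset.disjoint_empty_left _) ?_ ?_
      (Finset.disjoint_empty_left _)
    · intro T' _ hT' hmem
      have hlT : l ∉ T' := fun h => Finset.disjoint_left.1 hT' h (by simp)
      have h0 := gI_compl_le_ker (K := K) (G := G) (T := T') (fun i => if i ∈ T' then 0 else 1)
        (fun _ => 1) (fun _ _ _ => rfl) (fun i hi => by simp [hi]) hmem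
      rw [RingHom.mem_ker, xv, eval_X] at h0
      simp [hlT] at h0
    · intro v hv
      rw [Finset.mem_singleton] at hv
      exact hv ▸ hl
  · have := cc_le_of_subset hG.isAcyclic (T := ∅) (U := T) fun v _ => h v
    rw [cc_empty hG.connected, Finset.empty_union] at this
    simp at this
    omega
  · exact fun p hp hle => absurd (top_le_iff.1 hle) hp.ne_top

lemma cc_le_inter (hG : G.IsAcyclic) {B : Finset V} (h : ∀ v ∉ B, (nbr G ∅ v).card ≤ 2)
    (T : Finset V) : cc G T + (T ∩ B).card ≤ cc G (T ∩ B) + T.card := by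
  have := cc_le_of_subset hG (T := T ∩ B) (U := T \ B) fun v hv => h v (Finset.mem_sdiff.1 hv).2
  rwa [Finset.union_comm, Finset.sdiff_union_inter] at this

omit [DecidableEq V] [Fintype V] in
lemma minor_mem_gI_of_adj {W : Finset V} {a u w : V} (ha : a ∈ W) (hu : G.Adj u a)
    (hw : G.Adj w a) : minor K u w ∈ gI K G ∅ W :=
  minor_mem_relI (.step ha (.base hu) (.base hw.symm))

/-- One vertex `a` of degree three: `J_G` is the intersection of the ideal where `a` is eliminated,
of dimension `n + 1`, and the ideal of `G - a`, of dimension `n + 2`. The form is `f_{uw}` for two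
neighbours `u, w` of `a`. -/
lemma isACM_of_one (hG : G.IsTree) {a : V} (ha : (nbr G ∅ a).card = 3)
    (h : ∀ v ≠ a, (nbr G ∅ v).card ≤ 2) : IsACM K (gI K G ∅ ∅) := by
  obtain ⟨u, hu, w, hw, huw⟩ := Finset.one_lt_card.1 (show 1 < (nbr G ∅ a).card by omega)
  rw [mem_nbr_empty] at hu hw
  have hcc := cc_le_inter hG.isAcyclic (B := {a}) (G := G) (by simpa using h)
  have hc0 : cc G ∅ = 1 := cc_empty hG.connected
  have hca : cc G {a} = 3 := (cc_singleton hG a).trans ha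
  have hdisj : ∀ T : Finset V, Disjoint T {a} →
      Fintype.card V + cc G T ≤ Fintype.card V + 1 + T.card := by
    intro T hT
    have := hcc T
    rw [Finset.disjoint_iff_inter_eq_empty.1 hT, hc0, Finset.card_empty] at this
    omega
  refine isACM_of (U := gI K G {a} ∅) (Q := gI K G ∅ {a}) (f := minor K u w)
    (D := Fintype.card V + 1) two_pos (minor_isHomogeneous u w)
    (gI_mono (Finset.empty_subset _) le_rfl) (minor_mem_gI_of_adj (Finset.mem_singleton_self a) hu hw)
    (gI_elim ∅ ∅ a).ge ?_ ?_ ?_ (dim_prime_le fun T _ => ?_) (dim_prime_le hdisj) gI_le_mIdeal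
  · have hna : ∀ z, z ≠ a → ¬(delT G {a}).Reachable a z := by
      rintro z hz ⟨p⟩
      cases p with
      | nil => exact hz rfl
      | cons h _ => exact h.2.1 (Finset.mem_singleton_self a)
    have := minor_regular (K := K) (q := a) hG.isAcyclic hu hw huw (h u hu.ne) (h w hw.ne)
      (hna u hu.ne) (hna w hw.ne)
    rwa [minor_self, add_zero] at this
  · exact gI_depth hG.isAcyclic (Finset.disjoint_empty_right _) (by rw [hca]; simp)
  · exact gI_depth hG.isAcyclic (Finset.disjoint_empty_right _) (by rw [hc0]; simp)
  · by_cases haT : a ∈ T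
    · have := hcc T
      rw [Finset.inter_singleton_of_mem haT, hca, Finset.card_singleton] at this
      omega
    · have := hdisj T (Finset.disjoint_singleton_right.2 haT)
      omega

/-- Two adjacent vertices `a, b` of degree three: the part of dimension `n + 2` is the intersection
of the ideals of `G - a` and `G - b`, whose sum is the ideal of `G - {a, b}`. Adjacency gives
`c({a, b}) = 4`, which bounds the dimension and gives the sum the dimension `n + 2`. The form is
the sum of one minor at `a` and one at `b`. -/
lemma isACM_of_two (hG : G.IsTree) {a b : V} (hab : G.Adj a b) (ha : (nbr G ∅ a).card = 3)
    (hb : (nbr G ∅ b).card = 3) (h : ∀ v, v ≠ a → v ≠ b → (nbr G ∅ v).card ≤ 2) :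
    IsACM K (gI K G ∅ ∅) := by
  have hne := hab.ne
  have hex : ∀ a b, G.Adj a b → (nbr G ∅ a).card = 3 →
      ∃ u w, G.Adj u a ∧ G.Adj w a ∧ u ≠ w ∧ u ≠ b ∧ w ≠ b := by
    intro a b hab ha
    have h1 : ((nbr G ∅ a).erase b).card = 2 := by
      rw [Finset.card_erase_of_mem (mem_nbr_empty.2 hab.symm), ha]
    obtain ⟨u, hu, w, hw, huw⟩ := Finset.one_lt_card.1 (show 1 < ((nbr G ∅ a).erase b).card by omega)
    rw [Finset.mem_erase, mem_nbr_empty] at hu hw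
    exact ⟨u, w, hu.2, hw.2, huw, hu.1, hw.1⟩
  obtain ⟨a₁, a₂, ha₁, ha₂, haa, hab₁, hab₂⟩ := hex a b hab ha
  obtain ⟨b₁, b₂, hb₁, hb₂, hbb, hba₁, hba₂⟩ := hex b a hab.symm hb
  -- a neighbour `z ≠ a` of `b` lies in the component of `b` in `G - a`
  have hsep : ∀ a b z u, G.Adj a b → G.Adj z b → z ≠ a → G.Adj u a → u ≠ b →
      ¬(delT G {a}).Reachable z u := by
    intro a b z u hab hz hza hu hub hr
    refine not_reachable_of_adj hG.isAcyclic (Finset.mem_singleton_self a) hab.symm hu hub.symm ?_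
    refine (SimpleGraph.Adj.reachable ?_).symm.trans hr
    exact ⟨hz, by simpa using hza, by simpa using hab.ne.symm⟩
  have hcc := cc_le_inter hG.isAcyclic (B := {a, b}) (G := G) (fun v hv => by
    simp only [Finset.mem_insert, Finset.mem_singleton, not_or] at hv
    exact h v hv.1 hv.2)
  have hc0 : cc G ∅ = 1 := cc_empty hG.connected
  have hca : cc G {a} = 3 := (cc_singleton hG a).trans ha
  have hcb : cc G {b} = 3 := (cc_singleton hG b).trans hb
  have hcab : cc G {a, b} = 4 := by
    have h1 := cc_insert hG.isAcyclic (T := {b}) (v := a) (by simpa using hne)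
    have h2 := nbr_singleton_card hab
    omega
  have hcard : ({a, b} : Finset V).card = 2 := Finset.card_pair hne
  have hdisj : ∀ T : Finset V, Disjoint T {a, b} →
      Fintype.card V + cc G T ≤ Fintype.card V + 1 + T.card := by
    intro T hT
    have := hcc T
    rw [Finset.disjoint_iff_inter_eq_empty.1 hT, hc0, Finset.card_empty] at this
    omega
  have hda : HasDepth (mIdeal K (V ⊕ V)) (Fintype.card V + 1 + 1)
      (MvPolynomial (V ⊕ V) K ⧸ gI K G {a} ∅) :=
    gI_depth hG.isAcyclic (Finset.disjoint_empty_right _) (by rw [hca]; simp)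
  have hdb : HasDepth (mIdeal K (V ⊕ V)) (Fintype.card V + 1 + 1)
      (MvPolynomial (V ⊕ V) K ⧸ gI K G {b} ∅) :=
    gI_depth hG.isAcyclic (Finset.disjoint_empty_right _) (by rw [hcb]; simp)
  have hJa : gI K G ∅ ∅ ≤ gI K G {a} ∅ := gI_mono (Finset.empty_subset _) le_rfl
  have hJb : gI K G ∅ ∅ ≤ gI K G {b} ∅ := gI_mono (Finset.empty_subset _) le_rfl
  refine isACM_of (U := gI K G {a} ∅ ⊓ gI K G {b} ∅) (Q := gI K G ∅ {a, b})
    (f := minor K a₁ a₂ + minor K b₁ b₂)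
    (D := Fintype.card V + 1) two_pos ((minor_isHomogeneous _ _).add (minor_isHomogeneous _ _))
    (le_inf hJa hJb)
    (Ideal.add_mem _ (minor_mem_gI_of_adj (by simp) ha₁ ha₂)
      (minor_mem_gI_of_adj (by simp) hb₁ hb₂)) ?_ ?_ (hda.inf hdb ?_) ?_
    (dim_prime_le fun T _ => ?_) (dim_prime_le hdisj) (inf_le_left.trans gI_le_mIdeal)
  · rintro g ⟨hg, hga, hgb⟩
    rw [gI_elim ∅ ∅ a]
    refine ⟨?_, hga⟩
    rw [gI_elim ∅ (insert a ∅) b]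
    refine ⟨?_, gI_mono le_rfl (Finset.empty_subset _) hgb⟩
    rw [Finset.pair_comm] at hg
    exact hg
  · intro g hg
    have ha1 := h a₁ ha₁.ne hab₁
    have ha2 := h a₂ ha₂.ne hab₂
    have hb1 := h b₁ hba₁ hb₁.ne
    have hb2 := h b₂ hba₂ hb₂.ne
    refine ⟨minor_regular hG.isAcyclic ha₁ ha₂ haa ha1 ha2 (hsep a b _ _ hab hb₁ hba₁ ha₁ hab₁)
      (hsep a b _ _ hab hb₁ hba₁ ha₂ hab₂) g hg.1, ?_⟩
    refine minor_regular (q := a₂) hG.isAcyclic hb₁ hb₂ hbb hb1 hb2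
      (hsep b a _ _ hab.symm ha₁ hab₁ hb₁ hba₁) (hsep b a _ _ hab.symm ha₁ hab₁ hb₂ hba₂) g ?_
    rw [add_comm (minor K b₁ b₂)]
    exact hg.2
  · rw [gI_sup_self]
    refine gI_depth hG.isAcyclic (Finset.disjoint_empty_right _) ?_
    rw [← Finset.insert_eq, hcab, hcard]
    omega
  · exact gI_depth hG.isAcyclic (Finset.disjoint_empty_right _) (by rw [hc0]; simp)
  · have := hcc T
    by_cases haT : a ∈ T <;> by_cases hbT : b ∈ T
    · have h1 : T ∩ {a, b} = {a, b} := Finset.inter_eq_right.2 (by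
        simp [Finset.insert_subset_iff, haT, hbT])
      rw [h1, hcab, hcard] at this
      omega
    · have h1 : T ∩ {a, b} = {a} := by
        rw [Finset.inter_insert_of_mem haT, Finset.inter_singleton_of_notMem hbT, insert_empty_eq]
      rw [h1, hca, Finset.card_singleton] at this
      omega
    · have h1 : T ∩ {a, b} = {b} := by
        rw [Finset.inter_insert_of_notMem haT, Finset.inter_singleton_of_mem hbT]
      rw [h1, hcb, Finset.card_singleton] at this
      omega
    · have h1 := hdisj T (by simp [haT, hbT])
      omega

end Star

/-! ### The dimension of an approximately Cohen-Macaulay `S/J_G` -/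

section Converse

variable {K : Type} [Field K] {V : Type} [DecidableEq V] {G : SimpleGraph V} [Fintype V]

omit [DecidableEq V] in
/-- With `s = ∏ x_v`, an element `u` with `u * s ∈ J_G + (f ^ (n + 1))` has zero constant term:
restrict to the line `x = (X, …, X)`, `y = 0`, on which `J_G` vanishes, `s` becomes `X ^ n` and
`f` is divisible by `X`. -/
lemma mem_mIdeal_of_mul_prod_mem {f u : MvPolynomial (V ⊕ V) K} (hf : f ∈ mIdeal K (V ⊕ V))
    (h : u * ∏ v : V, xv K v ∈ gI K G ∅ ∅ ⊔ Ideal.span {f ^ (Fintype.card V + 1)}) :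
    u ∈ mIdeal K (V ⊕ V) := by
  let θ : MvPolynomial (V ⊕ V) K →ₐ[K] Polynomial K :=
    aeval (Sum.elim (fun _ => Polynomial.X) (fun _ => 0))
  have hx : ∀ v, θ (xv K v) = Polynomial.X := fun v => by simp [θ, xv]
  have hy : ∀ v, θ (yv K v) = 0 := fun v => by simp [θ, yv]
  have hJ : gI K G ∅ ∅ ≤ RingHom.ker θ := by
    refine relI_le (fun i hi => by simp at hi) (fun i hi => by simp at hi) fun i j _ => ?_
    rw [RingHom.mem_ker, minor, map_sub, map_mul, map_mul, hy, hy]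
    simp
  have hm : mIdeal K (V ⊕ V) ≤ Ideal.comap θ (Ideal.span {Polynomial.X}) := by
    refine Ideal.span_le.2 ?_
    rintro _ ⟨v | v, rfl⟩
    · exact Ideal.mem_comap.2 ((hx v).symm ▸ Ideal.mem_span_singleton_self _)
    · exact Ideal.mem_comap.2 ((hy v).symm ▸ Ideal.zero_mem _)
  have hXf : Polynomial.X ∣ θ f := Ideal.mem_span_singleton.1 (hm hf)
  obtain ⟨j, hj, z, hz, hjz⟩ := Submodule.mem_sup.1 h
  obtain ⟨w, rfl⟩ := Ideal.mem_span_singleton.1 hz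
  have h1 : θ u * Polynomial.X ^ Fintype.card V = θ f ^ (Fintype.card V + 1) * θ w := by
    have := congrArg θ hjz
    rw [map_add, map_mul, map_mul, map_pow, map_prod, (RingHom.mem_ker).1 (hJ hj), zero_add] at this
    simp only [hx, Finset.prod_const, Finset.card_univ] at this
    exact this.symm
  have h2 : Polynomial.X ∣ θ u := by
    have h3 : (Polynomial.X : Polynomial K) ^ Fintype.card V * Polynomial.X ∣
        Polynomial.X ^ Fintype.card V * θ u := by
      rw [mul_comm _ (θ u), h1, ← pow_succ]
      exact (pow_dvd_pow_of_dvd hXf _).mul_right _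
    exact (mul_dvd_mul_iff_left (pow_ne_zero _ Polynomial.X_ne_zero)).1 h3
  have hθ : (Polynomial.evalRingHom (0 : K)).comp (θ : MvPolynomial (V ⊕ V) K →+* Polynomial K) =
      constantCoeff := by
    refine MvPolynomial.ringHom_ext (fun r => by simp [θ]) ?_
    rintro (v | v) <;> simp [θ]
  rw [mIdeal_eq_ker, RingHom.mem_ker, ← hθ]
  obtain ⟨g, hg⟩ := h2
  simp [hg]

/-- The element `s = ∏ x_v` is killed by the prime `P_∅` modulo `J_G`, so `S/(J_G + (f ^ N))` has
an associated prime containing `P_∅`; hence its depth is at most `dim S/P_∅ = n + 1`. -/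
lemma dim_le_of_isACM (hG : G.Connected) (h : IsACM K (gI K G ∅ ∅)) :
    ringKrullDim (MvPolynomial (V ⊕ V) K ⧸ gI K G ∅ ∅) ≤
      ((Fintype.card V + 2 : ℕ) : WithBot ℕ∞) := by
  obtain ⟨d, f, hd, hf, hfm⟩ := h
  have hfI := homogeneous_mem_mIdeal hd hf
  obtain ⟨hCM, hdim⟩ := hfm (Fintype.card V + 1) (by omega)
  set J' := gI K G ∅ ∅ ⊔ Ideal.span {f ^ (Fintype.card V + 1)} with hJ'
  have hsm : ∀ r : MvPolynomial (V ⊕ V) K,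
      r • (Ideal.Quotient.mk J' (∏ v : V, xv K v)) = 0 ↔ r * ∏ v : V, xv K v ∈ J' := by
    intro r
    rw [← Ideal.Quotient.eq_zero_iff_mem, map_mul]
    rfl
  obtain ⟨y, Q, hQ, hy, hxQ, hQm⟩ := exists_ann_prime (m := mIdeal K (V ⊕ V))
    (Ideal.Quotient.mk J' (∏ v : V, xv K v))
    (fun r hr => mem_mIdeal_of_mul_prod_mem hfI ((hsm r).1 hr))
  have hPQ : gI K G ∅ (∅ : Finset V)ᶜ ≤ Q := by
    intro r hr
    refine hxQ r ((hsm r).2 (Ideal.mem_sup_left ?_))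
    rw [Finset.compl_empty] at hr
    rw [mul_comm]
    exact prod_xv_mul_mem_gI hr
  have hQd : ringKrullDim (MvPolynomial (V ⊕ V) K ⧸ Q) ≤ ((Fintype.card V + 1 : ℕ) : WithBot ℕ∞) :=
    (dim_quot_anti hPQ).trans (gI_compl_dim (by rw [cc_empty hG]; omega))
  have hdep := depth_le_dim_ann hQ hy hQm hQd
  rw [← hdim, ← hCM]
  have h3 : (depth (mIdeal K (V ⊕ V)) (MvPolynomial (V ⊕ V) K ⧸ J') : WithBot ℕ∞) ≤
      ((Fintype.card V + 1 : ℕ) : WithBot ℕ∞) := WithBot.coe_le_coe.2 hdep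
  refine (add_le_add_left h3 1).trans ?_
  norm_cast

/-- Since `dim S/P_T = n - |T| + c(T)` for every `T`, the bound on `dim S/J_G` limits the number
of components. -/
lemma cc_le_of_isACM (hG : G.IsTree) (h : IsACM K (gI K G ∅ ∅)) (T : Finset V) :
    cc G T ≤ T.card + 2 := by
  by_contra! hT
  have h1 : HasDepth (mIdeal K (V ⊕ V)) (Fintype.card V + 3)
      (MvPolynomial (V ⊕ V) K ⧸ gI K G T ∅) :=
    gI_depth hG.isAcyclic (Finset.disjoint_empty_right _) (by omega)
  have h2 := ((h1.le_dim gI_le_mIdeal).trans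
    (dim_quot_anti (gI_mono (Finset.empty_subset T) le_rfl))).trans
    (dim_le_of_isACM hG.connected h)
  have h3 : Fintype.card V + 3 ≤ Fintype.card V + 2 := by exact_mod_cast h2
  omega

end Converse

/-! ### Binomial edge ideals of trees -/

section Final

variable {K : Type} [Field K] {n : ℕ} {G : SimpleGraph (Fin n)}

lemma bei_eq_gI : bei K G = gI K G ∅ ∅ := by
  apply le_antisymm
  · refine Ideal.span_le.2 ?_
    rintro _ ⟨i, j, -, hij, rfl⟩
    exact minor_mem_relI (.base hij)
  · refine relI_le (fun i hi => by simp at hi) (fun i hi => by simp at hi) fun i j h => ?_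
    rw [conn_empty] at h
    rcases lt_or_gt_of_ne h.ne with hij | hij
    · exact Ideal.subset_span ⟨i, j, hij, h, rfl⟩
    · rw [minor_swap]
      exact neg_mem (Ideal.subset_span ⟨j, i, hij, h.symm, rfl⟩)

lemma deg_eq (v : Fin n) : deg G v = (nbr G ∅ v).card := by
  have : (nbr G ∅ v : Set (Fin n)) = G.neighborSet v := by
    ext u
    rw [Finset.mem_coe, mem_nbr_empty, SimpleGraph.mem_neighborSet, SimpleGraph.adj_comm]
  rw [deg, ← this, Nat.card_eq_card_toFinset, Finset.toFinset_coe]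

/-- A vertex `v` of degree at least four has `c({v}) ≥ 4`, and nonadjacent vertices `a, b` of
degree three have `c({a, b}) = 5`. -/
lemma threeStarLike_of_cc_le (hG : G.IsTree) (h : ∀ T : Finset (Fin n), cc G T ≤ T.card + 2) :
    ThreeStarLike G := by
  have hadj : ∀ a b, deg G a = 3 → deg G b = 3 → a ≠ b → G.Adj a b := by
    intro a b ha hb hab
    by_contra hn
    have h1 := cc_insert hG.isAcyclic (T := {a}) (v := b) (by simpa using hab.symm)
    have h2 : nbr G {a} b = nbr G ∅ b := by
      ext u
      rw [mem_nbr_empty, mem_nbr]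
      refine ⟨fun h => h.1, fun h => ⟨h, ?_, by simpa using hab.symm⟩⟩
      rw [Finset.mem_singleton]
      rintro rfl
      exact hn h
    have h3 := h (insert b {a})
    rw [Finset.card_pair hab.symm] at h3
    rw [h2, cc_singleton hG, ← deg_eq, ← deg_eq, ha, hb] at h1
    omega
  refine ⟨fun v => ?_, ?_⟩
  · have := h {v}
    rwa [cc_singleton hG, ← deg_eq, Finset.card_singleton] at this
  · by_cases hs : {v | deg G v = 3}.Subsingleton
    · exact Or.inl hs
    · rw [Set.not_subsingleton_iff] at hs
      obtain ⟨a, ha, b, hb, hab⟩ := hs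
      refine Or.inr ⟨a, b, hab, hadj a b ha hb hab, ?_⟩
      refine Set.Subset.antisymm (fun c hc => ?_) ?_
      · by_contra hcab
        simp only [Set.mem_insert_iff, Set.mem_singleton_iff, not_or] at hcab
        refine not_reachable_of_adj hG.isAcyclic (T := {c}) (Finset.mem_singleton_self c)
          (hadj a c ha hc (Ne.symm hcab.1)) (hadj b c hb hc (Ne.symm hcab.2)) hab
          (SimpleGraph.Adj.reachable ⟨hadj a b ha hb hab, ?_, ?_⟩)
        · simpa using Ne.symm hcab.1
        · simpa using Ne.symm hcab.2
      · rintro c (rfl | rfl)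
        exacts [ha, hb]

lemma isACM_of_threeStarLike (hG : G.IsTree) (h : ThreeStarLike G) : IsACM K (gI K G ∅ ∅) := by
  obtain ⟨hle, h⟩ := h
  have hlt : ∀ v, deg G v ≠ 3 → (nbr G ∅ v).card ≤ 2 := by
    intro v hv
    have := hle v
    rw [deg_eq] at this hv
    omega
  rcases h with h | ⟨a, b, -, hab, h⟩
  · rcases h.eq_empty_or_singleton with h | ⟨a, h⟩
    · refine isACM_of_degree_le_two hG fun v => hlt v fun hv => ?_
      have : v ∈ {v | deg G v = 3} := hv
      rw [h] at this
      exact this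
    · have ha : a ∈ {v | deg G v = 3} := h ▸ Set.mem_singleton a
      refine isACM_of_one hG (a := a) (by rw [← deg_eq]; exact ha) fun v hv => hlt v fun hv' => ?_
      have : v ∈ {v | deg G v = 3} := hv'
      rw [h] at this
      exact hv this
  · have ha : a ∈ {v | deg G v = 3} := h ▸ Set.mem_insert a _
    have hb : b ∈ {v | deg G v = 3} := h ▸ Set.mem_insert_of_mem a rfl
    refine isACM_of_two hG hab (by rw [← deg_eq]; exact ha) (by rw [← deg_eq]; exact hb)
      fun v hva hvb => hlt v fun hv => ?_
    have : v ∈ {v | deg G v = 3} := hv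
    rw [h] at this
    rcases this with h | h
    exacts [hva h, hvb h]

end Final

/-- Let `G` be a tree on the vertex set `[n]`.  Then `S/J_G` is
approximately Cohen-Macaulay if and only if `G` is 3-star like. -/
theorem statement4 (K : Type) [Field K] (n : ℕ) (G : SimpleGraph (Fin n))
    (hG : G.IsTree) :
    IsACM K (bei K G) ↔ ThreeStarLike G := by
  rw [bei_eq_gI]
  exact ⟨fun h => threeStarLike_of_cc_le hG (cc_le_of_isACM hG h), isACM_of_threeStarLike hG⟩

end BEIPaper
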